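/- arXiv:1401.3026 — 2 statements merged into one kernel-verified Lean document; each statement's English description precedes it below -/
import Mathlib

section
/- Let n ≥ 1 and let μ be a Borel probability measure on the space of real n×n matrices with bounded support, such that (A2) the support of μ leaves some proper cone K ⊆ ℝⁿ invariant, and (A3) the singular part of μ with respect to Lebesgue measure on ℝ^{n×n} is either zero or a finite linear combination of Dirac measures. Let A be a random matrix with law μ. Then ρ̂(supp μ) = lim_{p→∞} ρ(E[A^{⊗p}])^{1/p}, where the limit is over positive integers p and ρ denotes the spectral radius of a square matrix. -/
open MeasureTheory Filter Topology
open scoped ENNReal RealInnerProductSpace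

noncomputable section

/-- The space of real `n × n` matrices. -/
abbrev Mat (n : ℕ) := Matrix (Fin n) (Fin n) ℝ

/-- Euclidean space `ℝⁿ`. -/
abbrev EucSp (n : ℕ) := EuclideanSpace ℝ (Fin n)

/-- The (Borel = product) measurable structure on `n × n` real matrices. -/
instance matMeasurableSpace (n : ℕ) : MeasurableSpace (Mat n) :=
  inferInstanceAs (MeasurableSpace (Fin n → Fin n → ℝ))

/-- Lebesgue measure on the space of `n × n` real matrices `≅ ℝ^{n²}`. -/
def matLebesgue (n : ℕ) : Measure (Mat n) :=
  (inferInstance : MeasureSpace (Fin n → Fin n → ℝ)).volume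

/-- The operator norm (maximal singular value) of a real square matrix, induced by the
Euclidean norm. -/
def opNorm {m : ℕ} (A : Matrix (Fin m) (Fin m) ℝ) : ℝ :=
  ‖LinearMap.toContinuousLinearMap (Matrix.toEuclideanLin A)‖

/-- The product `A_k ⋯ A_1` of the matrices `f 0 = A_1, …, f (k-1) = A_k` (decreasing order of
indices). -/
def prodRev {m k : ℕ} (f : Fin k → Matrix (Fin m) (Fin m) ℝ) : Matrix (Fin m) (Fin m) ℝ :=
  ((List.ofFn f).reverse).prod

/-- The joint spectral radius of a set of matrices:
`ρ̂(M) = limsup_{k→∞} sup_{A₁,…,A_k ∈ M} ‖A_k ⋯ A₁‖^(1/k)`. -/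
def jsr {m : ℕ} (M : Set (Matrix (Fin m) (Fin m) ℝ)) : ℝ :=
  limsup (fun k : ℕ =>
    sSup {x : ℝ | ∃ f : Fin k → Matrix (Fin m) (Fin m) ℝ,
      (∀ i, f i ∈ M) ∧ x = opNorm (prodRev f)} ^ ((1 : ℝ) / k)) atTop

/-- `E[‖A_k ⋯ A₁‖^p]` where `A₁, …, A_k` are i.i.d. with law `μ`. -/
def kExpNorm {m : ℕ} (μ : Measure (Mat m)) (p k : ℕ) : ℝ :=
  ∫ f : Fin k → Mat m, opNorm (prodRev f) ^ p ∂(Measure.pi fun _ => μ)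

/-- The `L^p`-norm joint spectral radius (`p`-radius) of a probability distribution `μ`:
`ρ_{p,μ} = lim_{k→∞} (E[‖A_k ⋯ A₁‖^p])^{1/(pk)}`; since this limit exists for distributions
with bounded support, it coincides with the `limsup` used here. -/
def pRadius {m : ℕ} (μ : Measure (Mat m)) (p : ℕ) : ℝ :=
  limsup (fun k : ℕ => kExpNorm μ p k ^ (1 / (p * k : ℝ))) atTop

/-- The (topological) support of a measure on matrices. -/
def msupport {m : ℕ} (μ : Measure (Mat m)) : Set (Mat m) :=
  {A | ∀ ε : ℝ, 0 < ε → μ {B | opNorm (B - A) < ε} ≠ 0}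

/-- `μ` has bounded support. -/
def HasBoundedSupport {m : ℕ} (μ : Measure (Mat m)) : Prop :=
  ∃ C : ℝ, ∀ A ∈ msupport μ, opNorm A ≤ C

/-- A proper cone of `ℝⁿ`: a closed convex pointed cone with nonempty interior. -/
structure IsProperCone {m : ℕ} (K : Set (EucSp m)) : Prop where
  isClosed : IsClosed K
  convex : Convex ℝ K
  smul_mem : ∀ c : ℝ, 0 ≤ c → ∀ x ∈ K, c • x ∈ K
  pointed : ∀ x ∈ K, -x ∈ K → x = 0
  solid : (interior K).Nonempty

/-- A matrix `A` leaves a cone `K` invariant: `A K ⊆ K`. -/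
def LeavesInv {m : ℕ} (A : Matrix (Fin m) (Fin m) ℝ) (K : Set (EucSp m)) : Prop :=
  ∀ x ∈ K, Matrix.toEuclideanLin A x ∈ K

/-- A set of matrices leaves a cone invariant if each of its members does. -/
def SetLeavesInv {m : ℕ} (S : Set (Matrix (Fin m) (Fin m) ℝ)) (K : Set (EucSp m)) : Prop :=
  ∀ A ∈ S, LeavesInv A K

/-- `π(K)`: the set of matrices leaving the cone `K` invariant. -/
def piCone {m : ℕ} (K : Set (EucSp m)) : Set (Mat m) := {A | LeavesInv A K}

/-- Distance (valued in `ℝ≥0∞`, with `d(A, ∅) = ∞`) from a matrix to a set of matrices, in the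
operator norm. -/
def edistSet {m : ℕ} (A : Mat m) (S : Set (Mat m)) : ℝ≥0∞ :=
  ⨅ B ∈ S, ENNReal.ofReal (opNorm (A - B))

/-- Hausdorff distance between two sets of matrices (operator norm, valued in `ℝ≥0∞`). -/
def hausdorffDistE {m : ℕ} (S T : Set (Mat m)) : ℝ≥0∞ :=
  max (⨆ A ∈ S, edistSet A T) (⨆ B ∈ T, edistSet B S)

/-- `S_M = {A : A − M leaves K invariant}`, i.e. `{A : A ≥^K M}`. -/
def matSSet {m : ℕ} (K : Set (EucSp m)) (M : Mat m) : Set (Mat m) :=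
  {A | LeavesInv (A - M) K}

/-- `π_r = {M ∈ π(K) : d(M, ∂π(K)) ≥ r}`. -/
def piConeR {m : ℕ} (K : Set (EucSp m)) (r : ℝ) : Set (Mat m) :=
  {M | M ∈ piCone K ∧ ENNReal.ofReal r ≤ edistSet M (frontier (piCone K))}

/-- `M_r = (π_r ∩ supp μ_c) ∪ supp μ_s`. -/
def MrSet {m : ℕ} (K : Set (EucSp m)) (μc μs : Measure (Mat m)) (r : ℝ) : Set (Mat m) :=
  (piConeR K r ∩ msupport μc) ∪ msupport μs

/-- The measure `ν` is zero or a finite linear combination (with positive coefficients) of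
Dirac measures. -/
def IsFiniteDiracComb {m : ℕ} (ν : Measure (Mat m)) : Prop :=
  ν = 0 ∨ ∃ (N : ℕ) (w : Fin N → ℝ) (Ms : Fin N → Mat m),
    (∀ i, 0 < w i) ∧ ν = ∑ i, ENNReal.ofReal (w i) • Measure.dirac (Ms i)

/-- The `p`-th Kronecker power of a square matrix (with `A^{⊗0} = 1`, `A^{⊗(p+1)} = A^{⊗p} ⊗ A`). -/
def kronPow {m : ℕ} (A : Matrix (Fin m) (Fin m) ℝ) :
    (p : ℕ) → Matrix (Fin (m ^ p)) (Fin (m ^ p)) ℝ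
  | 0 => 1
  | p + 1 =>
    Matrix.reindex (finProdFinEquiv.trans (finCongr (pow_succ m p).symm))
      (finProdFinEquiv.trans (finCongr (pow_succ m p).symm))
      (Matrix.kroneckerMap (· * ·) (kronPow A p) A)

/-- The `q`-th Kronecker power of a vector. -/
def vecKronPow {m : ℕ} (x : EucSp m) : (q : ℕ) → EucSp (m ^ q)
  | 0 => WithLp.toLp 2 fun _ => 1
  | q + 1 => WithLp.toLp 2 fun i =>
      vecKronPow x q (finProdFinEquiv.symm (finCongr (pow_succ m q) i)).1 *
        x (finProdFinEquiv.symm (finCongr (pow_succ m q) i)).2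

/-- The spectral radius of a real square matrix: the largest modulus of a complex eigenvalue. -/
def specRad {m : ℕ} (A : Matrix (Fin m) (Fin m) ℝ) : ℝ :=
  sSup ((fun z : ℂ => ‖z‖) '' spectrum ℂ (A.map Complex.ofReal))

/-- The entrywise expectation `E[A^{⊗p}]` of the `p`-th Kronecker power under `μ`. -/
def kronExp {m : ℕ} (μ : Measure (Mat m)) (p : ℕ) :
    Matrix (Fin (m ^ p)) (Fin (m ^ p)) ℝ :=
  Matrix.of fun i j => ∫ A, kronPow A p i j ∂μ

/-- `V` is a stochastic Lyapunov function for `μ` of degree `p` with growth rate `γ`. -/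
def IsStochLyap {m : ℕ} (μ : Measure (Mat m)) (p : ℕ) (γ : ℝ) (V : EucSp m → ℝ) : Prop :=
  (∃ C₁ : ℝ, 0 < C₁ ∧ ∃ C₂ : ℝ, 0 < C₂ ∧
    ∀ x : EucSp m, C₁ * ‖x‖ ^ p ≤ V x ∧ V x ≤ C₂ * ‖x‖ ^ p) ∧
  ∀ x : EucSp m, (∫ A, V (Matrix.toEuclideanLin A x) ∂μ) ≤ γ ^ p * V x

/-- `ν` is a norm on `ℝ^m`. -/
def IsNormFn {m : ℕ} (ν : EucSp m → ℝ) : Prop :=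
  (∀ x, 0 ≤ ν x) ∧ (∀ x, ν x = 0 ↔ x = 0) ∧
  (∀ (a : ℝ) (x : EucSp m), ν (a • x) = |a| * ν x) ∧
  (∀ x y : EucSp m, ν (x + y) ≤ ν x + ν y)

/-- `ν` is cone absolute with respect to `K`:
`ν x = inf {ν (v + w) : v, w ∈ K, x = v − w}`. -/
def IsConeAbsolute {m : ℕ} (K : Set (EucSp m)) (ν : EucSp m → ℝ) : Prop :=
  ∀ x : EucSp m, ν x = sInf {r : ℝ | ∃ v ∈ K, ∃ w ∈ K, x = v - w ∧ r = ν (v + w)}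

/-- The dual cone `K* = {f : fᵀx ≥ 0 for all x ∈ K}`. -/
def dualConeSet {m : ℕ} (K : Set (EucSp m)) : Set (EucSp m) :=
  {f | ∀ x ∈ K, 0 ≤ ⟪f, x⟫}

/-- `ν` is cone linear with respect to `K`: `ν = ⟪f, ·⟫` on `K` for some `f ∈ K*`. -/
def IsConeLinear {m : ℕ} (K : Set (EucSp m)) (ν : EucSp m → ℝ) : Prop :=
  ∃ f ∈ dualConeSet K, ∀ x ∈ K, ν x = ⟪f, x⟫

/-- The matrix norm induced by a norm `ν` on `ℝ^m`. -/
def inducedNormFn {m : ℕ} (ν : EucSp m → ℝ) (A : Matrix (Fin m) (Fin m) ℝ) : ℝ :=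
  sSup {c : ℝ | ∃ x : EucSp m, x ≠ 0 ∧ c = ν (Matrix.toEuclideanLin A x) / ν x}

/-! **Upper bound.** If `ρ̂(supp μ) < s`, all products of `k` matrices of the support have norm at
most `s ^ k` for large `k`. Applied to elementary tensors, `E[A^{⊗p}] ^ k` is the expectation of
`(A_k ⋯ A_1)^{⊗p}`, so its entries are `O(s ^ (p k))` and `ρ(E[A^{⊗p}]) ≤ s ^ p`.

**Lower bound.** Let `ρ(E[A^{⊗p}]) < r ^ p` for infinitely many `p`. Choose `f` with `‖x‖ ≤ ⟪f, x⟫`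
on `K`; then for `x ∈ K` the mean `E ‖A_k ⋯ A_1 x‖ ^ p` is at most
`⟪f^{⊗p}, E[A^{⊗p}] ^ k x^{⊗p}⟫`, so the sums `∑ k, r ^ (-p k) E ‖A_k ⋯ A_1 x‖ ^ p` converge on `K`
and hence on `K - K = ℝⁿ`. Their `p`-th roots are norms `v_p` with `E v_p(A x) ^ p ≤ (r v_p(x)) ^ p`.
Given `r₁ > r`, a matrix `A` in the support and a vector `x`, Markov's inequality gives, for large
such `p`, matrices `B` of the support arbitrarily close to `A` with `v_p(B x) ≤ r₁ v_p(x)`. Hence an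
ultralimit of the normalised `v_p` is a nonzero seminorm that every matrix of the support contracts
by `r₁`. Its null space is invariant, and induction on the dimension yields a norm contracted by any
given `r₂ > r₁`, so that `ρ̂(supp μ) ≤ r₂`. -/

open scoped Matrix

/-! ### Seminorms in finite dimension -/

section Seminorms

variable {E : Type*} [AddCommGroup E] [Module ℝ E]

/-- A definite seminorm, that is, a norm; kept as a predicate on seminorms because several norms on
one space are in play. -/
def IsDefinite (v : Seminorm ℝ E) : Prop :=
  ∀ x, v x = 0 → x = 0

/-- The null space of a seminorm, along which the contracted norms are built by induction. -/
def seminormKer (u : Seminorm ℝ E) : Submodule ℝ E where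
  carrier := {x | u x = 0}
  add_mem' {x y} hx hy :=
    le_antisymm ((map_add_le_add u x y).trans_eq (by rw [hx, hy, add_zero])) (apply_nonneg _ _)
  zero_mem' := map_zero u
  smul_mem' c x hx := by rw [Set.mem_ofPred_eq, map_smul_eq_mul, hx, mul_zero]

lemma IsDefinite.pos {v : Seminorm ℝ E} (hv : IsDefinite v) {x : E} (hx : x ≠ 0) : 0 < v x :=
  (apply_nonneg v x).lt_of_ne' (mt (hv x) hx)

lemma IsDefinite.comp_of_injective {F : Type*} [AddCommGroup F] [Module ℝ F]
    {v : Seminorm ℝ E} (hv : IsDefinite v) {L : F →ₗ[ℝ] E} (hL : Function.Injective L) :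
    IsDefinite (v.comp L) :=
  fun x hx => (map_eq_zero_iff L hL).1 (hv (L x) hx)

lemma exists_tendsto_seminorm {ι : Type*} (U : Ultrafilter ι) {w : ι → Seminorm ℝ E} {b : E → ℝ}
    (hw : ∀ i x, w i x ≤ b x) :
    ∃ u : Seminorm ℝ E, ∀ x, Tendsto (fun i => w i x) U (𝓝 (u x)) := by
  have hlim : ∀ x, ∃ a, Tendsto (fun i => w i x) U (𝓝 a) := fun x => by
    obtain ⟨a, -, ha⟩ := (isCompact_Icc (a := 0) (b := b x)).ultrafilter_le_nhds
      (U.map fun i => w i x) (le_principal_iff.2 (mem_map.2 (Eventually.of_forall fun i =>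
        ⟨apply_nonneg (w i) x, hw i x⟩)))
    exact ⟨a, ha⟩
  choose u hu using hlim
  refine ⟨Seminorm.of u (fun x y => ?_) fun a x => ?_, hu⟩
  · exact le_of_tendsto_of_tendsto' (hu (x + y)) ((hu x).add (hu y)) fun i =>
      map_add_le_add (w i) x y
  · exact tendsto_nhds_unique (hu (a • x))
      (((hu x).const_mul ‖a‖).congr fun i => (map_smul_eq_mul (w i) a x).symm)

end Seminorms

section FiniteDimensional

variable {E : Type*} [NormedAddCommGroup E] [NormedSpace ℝ E] [FiniteDimensional ℝ E]

lemma continuous_seminorm (v : Seminorm ℝ E) : Continuous v :=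
  v.convexOn.locallyLipschitz.continuous

lemma exists_seminorm_le_apply_mul_norm [Nontrivial E] (v : Seminorm ℝ E) :
    ∃ z, ‖z‖ = 1 ∧ ∀ x, v x ≤ v z * ‖x‖ := by
  obtain ⟨z, hz, hmax⟩ := (isCompact_sphere (0 : E) 1).exists_isMaxOn
    (NormedSpace.sphere_nonempty.2 zero_le_one) (continuous_seminorm v).continuousOn
  refine ⟨z, mem_sphere_zero_iff_norm.1 hz, fun x => ?_⟩
  rcases eq_or_ne x 0 with rfl | hx
  · simp
  have hmem : ‖x‖⁻¹ • x ∈ Metric.sphere (0 : E) 1 := by simp [norm_smul, hx]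
  have hle : v (‖x‖⁻¹ • x) ≤ v z := hmax hmem
  rwa [map_smul_eq_mul, norm_inv, norm_norm, inv_mul_le_iff₀' (norm_pos_iff.2 hx)] at hle

lemma exists_norm_le_mul_of_pos {K : Set E} (hK : IsClosed K)
    (hsmul : ∀ c : ℝ, 0 ≤ c → ∀ x ∈ K, c • x ∈ K) {f : E → ℝ} (hf : Continuous f)
    (hf_smul : ∀ c : ℝ, 0 ≤ c → ∀ x, f (c • x) = c * f x) (hpos : ∀ x ∈ K, x ≠ 0 → 0 < f x) :
    ∃ c : ℝ, 0 < c ∧ ∀ x ∈ K, ‖x‖ ≤ c * f x := by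
  obtain ⟨a, ha, hmin⟩ := ((isCompact_sphere (0 : E) 1).inter_right hK).exists_forall_le'
    hf.continuousOn fun x hx => hpos x hx.2 (ne_zero_of_mem_unit_sphere ⟨x, hx.1⟩)
  refine ⟨a⁻¹, inv_pos.2 ha, fun x hx => ?_⟩
  rcases eq_or_ne x 0 with rfl | hx0
  · have hf0 : f 0 = 0 := by simpa using hf_smul 0 le_rfl 0
    simp [hf0]
  have hmem : ‖x‖⁻¹ • x ∈ Metric.sphere (0 : E) 1 ∩ K :=
    ⟨by simp [norm_smul, hx0], hsmul _ (by positivity) x hx⟩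
  have hle := hmin _ hmem
  rw [hf_smul _ (by positivity), ← div_eq_inv_mul, le_div_iff₀ (norm_pos_iff.2 hx0)] at hle
  rwa [← div_eq_inv_mul, le_div_iff₀' ha]

lemma IsDefinite.exists_norm_le {v : Seminorm ℝ E} (hv : IsDefinite v) :
    ∃ c : ℝ, 0 < c ∧ ∀ x, ‖x‖ ≤ c * v x := by
  simpa using exists_norm_le_mul_of_pos (K := Set.univ) isClosed_univ (fun _ _ _ _ => trivial)
    (continuous_seminorm v) (fun c hc x => by rw [map_smul_eq_mul, Real.norm_of_nonneg hc])
    fun _ _ => hv.pos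

end FiniteDimensional

/-! ### Seminorms contracted by a family of linear maps -/

section Contraction

variable {E ι κ : Type*} [NormedAddCommGroup E] [NormedSpace ℝ E] {A : κ → E →ₗ[ℝ] E} {r r' : ℝ}

/-- In the limit along `l`, the seminorms `v i` are contracted by the factor `r` up to moving the
map within the family: at every point, each `A k` is approximated by maps `A j` contracting `v i`.
-/
def IsAsymptoticallyContracted (l : Filter ι) (v : ι → Seminorm ℝ E) (A : κ → E →ₗ[ℝ] E)
    (r : ℝ) : Prop :=
  ∀ k x, ∀ δ > 0, ∀ᶠ i in l, ∃ j, ‖A j x - A k x‖ ≤ δ ∧ v i (A j x) ≤ r * v i x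

lemma IsAsymptoticallyContracted.restrict {l : Filter ι} {v : ι → Seminorm ℝ E}
    (h : IsAsymptoticallyContracted l v A r) {W : Submodule ℝ E} (hW : ∀ k, ∀ x ∈ W, A k x ∈ W) :
    IsAsymptoticallyContracted l (fun i => (v i).comp W.subtype) (fun k => (A k).restrict (hW k))
      r :=
  fun k x => h k x

variable [FiniteDimensional ℝ E]

/- The limit is taken along an ultrafilter, after normalising `v i` to have maximum `1` on the unit
sphere; limits of maximum points keep it nonzero. -/
lemma IsAsymptoticallyContracted.exists_seminorm [Nontrivial E] {l : Filter ι} [l.NeBot]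
    {v : ι → Seminorm ℝ E} (hv : ∀ i, IsDefinite (v i))
    (h : IsAsymptoticallyContracted l v A r) :
    ∃ u : Seminorm ℝ E, (∃ x, u x ≠ 0) ∧ ∀ k x, u (A k x) ≤ r * u x := by
  choose z hz hmax using fun i => exists_seminorm_le_apply_mul_norm (v i)
  have hvz : ∀ i, 0 < v i (z i) := fun i => (hv i).pos (norm_ne_zero_iff.1 (by simp [hz]))
  let w : ι → Seminorm ℝ E := fun i => (v i (z i))⁻¹.toNNReal • v i
  have hw : ∀ i x, w i x = (v i (z i))⁻¹ * v i x := fun i x => by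
    rw [smul_apply, NNReal.smul_def, smul_eq_mul,
      Real.coe_toNNReal _ (inv_pos.2 (hvz i)).le]
  have hw_le : ∀ i x, w i x ≤ ‖x‖ := fun i x => by
    rw [hw, inv_mul_le_iff₀ (hvz i)]
    exact hmax i x
  have hwz : ∀ i, w i (z i) = 1 := fun i => by rw [hw, inv_mul_cancel₀ (hvz i).ne']
  have hwA : ∀ i j x, v i (A j x) ≤ r * v i x → w i (A j x) ≤ r * w i x := fun i j x hj => by
    rw [hw, hw, mul_left_comm]
    exact mul_le_mul_of_nonneg_left hj (inv_pos.2 (hvz i)).le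
  let U := Ultrafilter.of l
  obtain ⟨u, hu⟩ := exists_tendsto_seminorm U hw_le
  obtain ⟨x, -, hx⟩ := (isCompact_sphere (0 : E) 1).ultrafilter_le_nhds (U.map z)
    (le_principal_iff.2 (mem_map.2 (Eventually.of_forall fun i => by simp [hz])))
  refine ⟨u, ⟨x, ?_⟩, fun k y => le_of_forall_pos_le_add fun δ hδ => ?_⟩
  · have hzx : Tendsto (fun i => ‖z i - x‖) U (𝓝 0) := tendsto_iff_norm_sub_tendsto_zero.1 hx
    have h1 : 1 ≤ 0 + u x := ge_of_tendsto' (hzx.add (hu x)) fun i => by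
      linarith [map_add_le_add (w i) (z i - x) x, hw_le i (z i - x), hwz i,
        congrArg (w i) (sub_add_cancel (z i) x)]
    linarith
  · refine le_of_tendsto_of_tendsto (hu (A k y)) (((hu y).const_mul r).add_const δ) ?_
    filter_upwards [Ultrafilter.of_le l (h k y δ hδ)] with i ⟨j, hj, hcontr⟩
    have hsub : w i (A k y) ≤ w i (A j y) + w i (A j y - A k y) := by
      simpa using map_sub_le_add (w i) (A j y) (A j y - A k y)
    linarith [hw_le i (A j y - A k y), hwA i j y hcontr]

lemma exists_projection_seminormKer (u : Seminorm ℝ E) :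
    ∃ P : E →ₗ[ℝ] seminormKer u, (∀ w : seminormKer u, P w = w) ∧
      ∃ c : ℝ, 0 < c ∧ ∀ x, ‖x - P x‖ ≤ c * u x := by
  obtain ⟨P, hP⟩ := (seminormKer u).subtype.exists_leftInverse_of_injective
    (seminormKer u).ker_subtype
  have hPw : ∀ w : seminormKer u, P w = w := LinearMap.congr_fun hP
  have hdef : IsDefinite (u.comp (LinearMap.ker P).subtype) := fun x hx => by
    have hx0 : (⟨x, hx⟩ : seminormKer u) = 0 := (hPw ⟨x, hx⟩).symm.trans x.2
    simpa using congrArg Subtype.val hx0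
  obtain ⟨c, hc, hcu⟩ := hdef.exists_norm_le
  refine ⟨P, hPw, c, hc, fun x => (hcu ⟨x - P x, by simp [hPw]⟩).trans ?_⟩
  gcongr
  exact (map_sub_le_add u x (P x)).trans_eq (by rw [(P x).2, add_zero])

/- The norm is `κ * u x + N' (P x)` with `P` a projection onto the null space of `u`: as `x - P x`
is controlled by `u x`, a large `κ` absorbs the part of `A (x - P x)` in the null space. -/
lemma exists_contracted_norm_of_seminormKer {C : ℝ} (hC : 0 ≤ C) (hA : ∀ k x, ‖A k x‖ ≤ C * ‖x‖)
    (hrr' : r < r') {u : Seminorm ℝ E} (hu : ∀ k x, u (A k x) ≤ r * u x)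
    (hker : ∀ k, ∀ x ∈ seminormKer u, A k x ∈ seminormKer u)
    {N' : Seminorm ℝ (seminormKer u)} (hN'_def : IsDefinite N')
    (hN' : ∀ k x, N' ((A k).restrict (hker k) x) ≤ r' * N' x) :
    ∃ N : Seminorm ℝ E, IsDefinite N ∧ ∀ k x, N (A k x) ≤ r' * N x := by
  obtain ⟨P, hP, c, hc, hcu⟩ := exists_projection_seminormKer u
  obtain ⟨L, hL, hLN⟩ := Seminorm.bound_of_continuous_normedSpace (N'.comp P)
    (continuous_seminorm _)
  have hPA : ∀ k x, N' (P (A k x)) ≤ r' * N' (P x) + L * (C * (c * u x)) := fun k x =>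
    calc N' (P (A k x))
        = N' ((A k).restrict (hker k) (P x) + P (A k (x - P x))) := by
          rw [← hP ((A k).restrict (hker k) (P x)), ← map_add, LinearMap.coe_restrict_apply,
            ← map_add, add_sub_cancel]
      _ ≤ N' ((A k).restrict (hker k) (P x)) + N' (P (A k (x - P x))) := map_add_le_add _ _ _
      _ ≤ r' * N' (P x) + L * ‖A k (x - P x)‖ := add_le_add (hN' k _) (hLN _)
      _ ≤ r' * N' (P x) + L * (C * (c * u x)) := by
          gcongr
          exact (hA k _).trans (by gcongr; exact hcu x)
  set κ : ℝ := L * C * c / (r' - r) + 1 with hκ_def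
  have hr : 0 < r' - r := sub_pos.2 hrr'
  have hκ : 0 < κ := by positivity
  let N : Seminorm ℝ E := κ.toNNReal • u + N'.comp P
  have hN : ∀ x, N x = κ * u x + N' (P x) := fun x => by
    rw [add_apply, smul_apply, NNReal.smul_def, smul_eq_mul, Real.coe_toNNReal _ hκ.le,
      Seminorm.comp_apply]
  refine ⟨N, fun x hx => ?_, fun k x => ?_⟩
  · rw [hN, add_eq_zero_iff_of_nonneg (by positivity) (apply_nonneg _ _)] at hx
    have hxker : u x = 0 := (mul_eq_zero.1 hx.1).resolve_left hκ.ne'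
    have hPx : P x = ⟨x, hxker⟩ := hP ⟨x, hxker⟩
    simpa using congrArg Subtype.val (hPx.symm.trans (hN'_def _ hx.2))
  · have hκ_mul : κ * (r' - r) = L * C * c + (r' - r) := by
      rw [hκ_def, add_mul, one_mul, div_mul_cancel₀ _ hr.ne']
    rw [hN, hN]
    nlinarith [hPA k x, mul_le_mul_of_nonneg_left (hu k x) hκ.le, apply_nonneg u x]

theorem exists_contracted_norm {l : Filter ι} [l.NeBot] {v : ι → Seminorm ℝ E}
    (hv : ∀ i, IsDefinite (v i)) (h : IsAsymptoticallyContracted l v A r) (hrr' : r < r')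
    {C : ℝ} (hC : 0 ≤ C) (hA : ∀ k x, ‖A k x‖ ≤ C * ‖x‖) :
    ∃ N : Seminorm ℝ E, IsDefinite N ∧ ∀ k x, N (A k x) ≤ r' * N x := by
  induction hd : Module.finrank ℝ E using Nat.strong_induction_on generalizing E with
  | _ d ih =>
  rcases subsingleton_or_nontrivial E with _ | _
  · exact ⟨0, fun x _ => Subsingleton.elim x 0, by simp⟩
  obtain ⟨u, ⟨x, hx⟩, hu⟩ := h.exists_seminorm hv
  have hlt : Module.finrank ℝ (seminormKer u) < d :=
    hd ▸ Submodule.finrank_lt fun htop => hx (htop.ge trivial : x ∈ seminormKer u)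
  have hker : ∀ k, ∀ x ∈ seminormKer u, A k x ∈ seminormKer u := fun k x hx =>
    le_antisymm ((hu k x).trans_eq (by rw [show u x = 0 from hx, mul_zero])) (apply_nonneg _ _)
  obtain ⟨N', hN'_def, hN'⟩ := ih _ hlt
    (fun i => (hv i).comp_of_injective (seminormKer u).injective_subtype) (h.restrict hker)
    (fun k x => hA k x) rfl
  exact exists_contracted_norm_of_seminormKer hC hA hrr' hu hker hN'_def hN'

end Contraction

/-! ### The joint spectral radius -/

section JointSpectralRadius

variable {m k : ℕ}

lemma opNorm_nonneg (A : Mat m) : 0 ≤ opNorm A := norm_nonneg _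

lemma norm_toEuclideanLin_le (A : Mat m) (x : EucSp m) :
    ‖Matrix.toEuclideanLin A x‖ ≤ opNorm A * ‖x‖ :=
  (LinearMap.toContinuousLinearMap (Matrix.toEuclideanLin A)).le_opNorm x

lemma opNorm_le (A : Mat m) {c : ℝ} (hc : 0 ≤ c)
    (h : ∀ x, ‖Matrix.toEuclideanLin A x‖ ≤ c * ‖x‖) : opNorm A ≤ c :=
  ContinuousLinearMap.opNorm_le_bound _ hc h

lemma abs_apply_le_opNorm (A : Mat m) (i j : Fin m) : |A i j| ≤ opNorm A := by
  simpa [Matrix.toLpLin_apply] using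
    (PiLp.norm_apply_le (Matrix.toEuclideanLin A (EuclideanSpace.single j 1)) i).trans
      (norm_toEuclideanLin_le A (EuclideanSpace.single j 1))

lemma toEuclideanLin_mul (A B : Mat m) (x : EucSp m) :
    Matrix.toEuclideanLin (A * B) x = Matrix.toEuclideanLin A (Matrix.toEuclideanLin B x) := by
  simp [Matrix.toLpLin_apply]

lemma prodRev_cons (A : Mat m) (f : Fin k → Mat m) :
    prodRev (Fin.cons A f : Fin (k + 1) → Mat m) = prodRev f * A := by
  simp [prodRev, List.ofFn_succ]

lemma apply_prodRev_le {c : ℝ} (hc : 0 ≤ c) (N : EucSp m → ℝ) (f : Fin k → Mat m)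
    (h : ∀ i x, N (Matrix.toEuclideanLin (f i) x) ≤ c * N x) (x : EucSp m) :
    N (Matrix.toEuclideanLin (prodRev f) x) ≤ c ^ k * N x := by
  induction k generalizing x with
  | zero => simp [prodRev]
  | succ k ih =>
    rw [← Fin.cons_self_tail f, prodRev_cons, toEuclideanLin_mul]
    calc N (Matrix.toEuclideanLin (prodRev (Fin.tail f)) (Matrix.toEuclideanLin (f 0) x))
        ≤ c ^ k * N (Matrix.toEuclideanLin (f 0) x) := ih _ (fun i x => h _ x) _
      _ ≤ c ^ k * (c * N x) := by gcongr; exact h 0 x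
      _ = c ^ (k + 1) * N x := by ring

/-- The norms of the products of length `k` over `M`, whose supremum enters the definition of
`jsr M`. -/
def prodNorms (M : Set (Mat m)) (k : ℕ) : Set ℝ :=
  {x | ∃ f : Fin k → Mat m, (∀ i, f i ∈ M) ∧ x = opNorm (prodRev f)}

variable {M : Set (Mat m)} {C r s : ℝ}

lemma sSup_prodNorms_nonneg (M : Set (Mat m)) (k : ℕ) : 0 ≤ sSup (prodNorms M k) :=
  Real.sSup_nonneg (by rintro _ ⟨f, -, rfl⟩; exact opNorm_nonneg _)

lemma pow_mem_upperBounds_prodNorms (hC : 0 ≤ C) (hM : ∀ A ∈ M, opNorm A ≤ C) (k : ℕ) :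
    C ^ k ∈ upperBounds (prodNorms M k) := by
  rintro _ ⟨f, hf, rfl⟩
  exact opNorm_le _ (pow_nonneg hC k) fun x => apply_prodRev_le hC (fun y => ‖y‖) f
    (fun i x => (norm_toEuclideanLin_le _ x).trans (by gcongr; exact hM _ (hf i))) x

lemma isBoundedUnder_sSup_prodNorms (hC : 0 ≤ C) (hM : ∀ A ∈ M, opNorm A ≤ C) :
    IsBoundedUnder (· ≤ ·) atTop fun k : ℕ => sSup (prodNorms M k) ^ ((1 : ℝ) / k) := by
  refine isBoundedUnder_of_eventually_le (a := C) ?_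
  filter_upwards [eventually_gt_atTop 0] with k hk
  calc sSup (prodNorms M k) ^ ((1 : ℝ) / k) ≤ (C ^ k) ^ ((1 : ℝ) / k) := by
        gcongr
        · exact sSup_prodNorms_nonneg M k
        · exact Real.sSup_le (pow_mem_upperBounds_prodNorms hC hM k) (pow_nonneg hC k)
    _ = C := by rw [one_div, Real.pow_rpow_inv_natCast hC hk.ne']

lemma jsr_nonneg (hC : 0 ≤ C) (hM : ∀ A ∈ M, opNorm A ≤ C) : 0 ≤ jsr M :=
  le_limsup_of_le (isBoundedUnder_sSup_prodNorms hC hM) fun _ hb =>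
    let ⟨k, hk⟩ := hb.exists
    (Real.rpow_nonneg (sSup_prodNorms_nonneg M k) _).trans hk

lemma eventually_opNorm_prodRev_le (hC : 0 ≤ C) (hM : ∀ A ∈ M, opNorm A ≤ C) (hs : jsr M < s) :
    ∀ᶠ k : ℕ in atTop, ∀ f : Fin k → Mat m, (∀ i, f i ∈ M) → opNorm (prodRev f) ≤ s ^ k := by
  filter_upwards [eventually_lt_of_limsup_lt hs (isBoundedUnder_sSup_prodNorms hC hM),
    eventually_gt_atTop 0] with k hk hk0 f hf
  have hsup := sSup_prodNorms_nonneg M k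
  calc opNorm (prodRev f) ≤ sSup (prodNorms M k) :=
        le_csSup ⟨C ^ k, pow_mem_upperBounds_prodNorms hC hM k⟩ ⟨f, hf, rfl⟩
    _ = (sSup (prodNorms M k) ^ ((1 : ℝ) / k)) ^ k := by
        rw [one_div, Real.rpow_inv_natCast_pow hsup hk0.ne']
    _ ≤ s ^ k := pow_le_pow_left₀ (Real.rpow_nonneg hsup _) hk.le k

lemma jsr_le_of_opNorm_prodRev_le (hC : 0 < C) (hr : 0 ≤ r)
    (h : ∀ (k : ℕ) (f : Fin k → Mat m), (∀ i, f i ∈ M) → opNorm (prodRev f) ≤ C * r ^ k) :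
    jsr M ≤ r := by
  have hlim : Tendsto (fun k : ℕ => C ^ ((1 : ℝ) / k) * r) atTop (𝓝 r) := by
    simpa using ((Real.continuousAt_const_rpow hC.ne').tendsto.comp
      tendsto_one_div_atTop_nhds_zero_nat).mul_const r
  have hle : ∀ᶠ k : ℕ in atTop, sSup (prodNorms M k) ^ ((1 : ℝ) / k) ≤ C ^ ((1 : ℝ) / k) * r := by
    filter_upwards [eventually_gt_atTop 0] with k hk
    calc sSup (prodNorms M k) ^ ((1 : ℝ) / k) ≤ (C * r ^ k) ^ ((1 : ℝ) / k) := by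
          gcongr
          · exact sSup_prodNorms_nonneg M k
          · exact Real.sSup_le (by rintro _ ⟨f, hf, rfl⟩; exact h k f hf) (by positivity)
      _ = C ^ ((1 : ℝ) / k) * r := by
          rw [Real.mul_rpow hC.le (by positivity), one_div, Real.pow_rpow_inv_natCast hr hk.ne']
  refine (limsup_le_limsup hle ?_ hlim.isBoundedUnder_le).trans_eq hlim.limsup_eq
  exact isCoboundedUnder_le_of_le atTop (x := 0) fun k =>
    Real.rpow_nonneg (sSup_prodNorms_nonneg M k) _

lemma jsr_le_of_contracted_norm (hr : 0 ≤ r) {N : Seminorm ℝ (EucSp m)} (hN : IsDefinite N)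
    (h : ∀ A ∈ M, ∀ x, N (Matrix.toEuclideanLin A x) ≤ r * N x) : jsr M ≤ r := by
  obtain ⟨c, hc, hcN⟩ := hN.exists_norm_le
  obtain ⟨D, hD, hDN⟩ := Seminorm.bound_of_continuous_normedSpace N (continuous_seminorm N)
  refine jsr_le_of_opNorm_prodRev_le (mul_pos hc hD) hr fun k f hf =>
    opNorm_le _ (by positivity) fun x => ?_
  calc ‖Matrix.toEuclideanLin (prodRev f) x‖ ≤ c * N (Matrix.toEuclideanLin (prodRev f) x) :=
        hcN _
    _ ≤ c * (r ^ k * N x) := by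
        gcongr
        exact apply_prodRev_le hr N f (fun i => h _ (hf i)) x
    _ ≤ c * (r ^ k * (D * ‖x‖)) := by gcongr; exact hDN x
    _ = c * D * r ^ k * ‖x‖ := by ring

end JointSpectralRadius

/-! ### The spectral radius and the growth of powers -/

section SpectralRadius

attribute [local instance] Matrix.linftyOpNormedRing Matrix.linftyOpNormedAlgebra

variable {m : ℕ} {T : Mat m} {r : ℝ}

lemma specRad_nonneg (T : Mat m) : 0 ≤ specRad T :=
  Real.sSup_nonneg (by rintro _ ⟨z, -, rfl⟩; exact norm_nonneg z)

lemma norm_le_specRad {z : ℂ} (hz : z ∈ spectrum ℂ (T.map Complex.ofReal)) : ‖z‖ ≤ specRad T :=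
  le_csSup ((spectrum.isCompact (𝕜 := ℂ) (T.map Complex.ofReal)).image continuous_norm).bddAbove
    ⟨z, hz, rfl⟩

lemma pow_map_ofReal_apply (T : Mat m) (k : ℕ) (i j : Fin m) :
    (T.map Complex.ofReal ^ k) i j = ((T ^ k) i j : ℂ) :=
  congrFun₂ (Matrix.map_pow T Complex.ofRealHom k).symm i j

lemma isBigO_pow_of_specRad_lt (hr : specRad T < r) (i j : Fin m) :
    (fun k : ℕ => (T ^ k) i j) =O[atTop] fun k : ℕ => r ^ k := by
  have : Nonempty (Fin m) := ⟨i⟩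
  lift r to NNReal using (specRad_nonneg T).trans hr.le
  have hlt : spectralRadius ℂ (T.map Complex.ofReal) < (r : ℝ≥0∞) :=
    spectrum.spectralRadius_lt_of_forall_lt _ fun z hz => (norm_le_specRad hz).trans_lt hr
  refine Asymptotics.IsBigO.of_bound 1 ?_
  filter_upwards [(spectrum.pow_nnnorm_pow_one_div_tendsto_nhds_spectralRadius
    (T.map Complex.ofReal)).eventually (gt_mem_nhds hlt), eventually_gt_atTop 0] with k hk hk0
  have hpow : ‖T.map Complex.ofReal ^ k‖₊ ≤ r ^ k := by
    have := pow_le_pow_left' hk.le k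
    rw [one_div, ENNReal.rpow_inv_natCast_pow hk0.ne'] at this
    exact_mod_cast this
  have hentry : ‖(T.map Complex.ofReal ^ k) i j‖₊ ≤ ‖T.map Complex.ofReal ^ k‖₊ := by
    rw [Matrix.linfty_opNNNorm_def]
    exact (Finset.single_le_sum (f := fun j => ‖(T.map Complex.ofReal ^ k) i j‖₊)
      (fun _ _ => zero_le) (Finset.mem_univ j)).trans
      (Finset.le_sup (f := fun i => ∑ j, ‖(T.map Complex.ofReal ^ k) i j‖₊) (Finset.mem_univ i))
  rw [pow_map_ofReal_apply] at hentry
  simpa using NNReal.coe_le_coe.2 (hentry.trans hpow)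

lemma isBigO_dotProduct_pow_mulVec (hr : specRad T < r) (φ x : Fin m → ℝ) :
    (fun k : ℕ => φ ⬝ᵥ T ^ k *ᵥ x) =O[atTop] fun k : ℕ => r ^ k := by
  simp only [dotProduct, Matrix.mulVec, Finset.mul_sum]
  refine .fun_sum fun i _ => .fun_sum fun j _ => .const_mul_left ?_ (φ i)
  simpa only [mul_comm _ (x j)] using (isBigO_pow_of_specRad_lt hr i j).const_mul_left (x j)

lemma exists_mulVec_eq_smul {z : ℂ} {B : Matrix (Fin m) (Fin m) ℂ} (hz : z ∈ spectrum ℂ B) :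
    ∃ ψ, ψ ≠ 0 ∧ B *ᵥ ψ = z • ψ := by
  rw [← Matrix.spectrum_toLin', ← Module.End.hasEigenvalue_iff_mem_spectrum] at hz
  obtain ⟨ψ, hψ⟩ := hz.exists_hasEigenvector
  exact ⟨ψ, hψ.2, hψ.apply_eq_smul⟩

lemma specRad_le_of_isBigO_pow (hr : 0 < r)
    (h : ∀ i j, (fun k : ℕ => (T ^ k) i j) =O[atTop] fun k : ℕ => r ^ k) : specRad T ≤ r := by
  refine Real.sSup_le ?_ hr.le
  rintro _ ⟨z, hz, rfl⟩
  obtain ⟨ψ, hψ0, hψ⟩ := exists_mulVec_eq_smul hz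
  obtain ⟨i, hi⟩ := Function.ne_iff.1 hψ0
  have hpow : ∀ k : ℕ, ψ i * z ^ k = ∑ j, ψ j * ((T ^ k) i j : ℂ) := fun k => by
    have hiter : T.map Complex.ofReal ^ k *ᵥ ψ = z ^ k • ψ := by
      induction k with
      | zero => simp
      | succ k ih =>
        rw [pow_succ, ← Matrix.mulVec_mulVec, hψ, Matrix.mulVec_smul, ih, smul_smul, pow_succ']
    simpa [Matrix.mulVec, dotProduct, pow_map_ofReal_apply, mul_comm] using
      (congrFun hiter i).symm
  have hO : (fun k : ℕ => ψ i * z ^ k) =O[atTop] fun k : ℕ => r ^ k := by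
    simp_rw [hpow]
    exact .fun_sum fun j _ => ((h i j).norm_left.congr_left fun k =>
      (Complex.norm_real _).symm).of_norm_left.const_mul_left (ψ j)
  have hz_pow : (fun k : ℕ => ‖z‖ ^ k) =O[atTop] fun k : ℕ => r ^ k := by
    simpa only [norm_pow] using ((Asymptotics.isBigO_const_mul_left_iff hi).1 hO).norm_left
  by_contra! hlt
  exact hz_pow.not_isLittleO (.of_forall fun k => pow_ne_zero k (hr.trans hlt).ne')
    (isLittleO_pow_pow_of_lt_left hr.le hlt)

end SpectralRadius

/-! ### Kronecker powers and elementary tensors -/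

section ElementaryTensors

variable {m p : ℕ}

/-- The splitting of an index of the `(p+1)`-st Kronecker power into an index of the `p`-th power
and a base index, as in the definition of `kronPow`. -/
def kronIdx (m p : ℕ) : Fin (m ^ (p + 1)) ≃ Fin (m ^ p) × Fin m :=
  (finCongr (pow_succ m p)).trans finProdFinEquiv.symm

/-- The elementary tensor `x₀ ⊗ ⋯ ⊗ x_{p-1}`, with the index convention of `kronPow`. -/
def elemTensor : {p : ℕ} → (Fin p → EucSp m) → Fin (m ^ p) → ℝ
  | 0, _ => fun _ => 1
  | p + 1, x => fun i =>
      elemTensor (Fin.init x) (kronIdx m p i).1 * x (Fin.last p) (kronIdx m p i).2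

lemma kronPow_succ_apply (A : Mat m) (i j : Fin (m ^ (p + 1))) :
    kronPow A (p + 1) i j =
      kronPow A p (kronIdx m p i).1 (kronIdx m p j).1 * A (kronIdx m p i).2 (kronIdx m p j).2 :=
  rfl

lemma elemTensor_succ_apply (x : Fin (p + 1) → EucSp m) (i : Fin (m ^ (p + 1))) :
    elemTensor x i =
      elemTensor (Fin.init x) (kronIdx m p i).1 * x (Fin.last p) (kronIdx m p i).2 :=
  rfl

lemma sum_kronIdx_mul (f : Fin (m ^ p) → ℝ) (g : Fin m → ℝ) :
    ∑ i, f (kronIdx m p i).1 * g (kronIdx m p i).2 = (∑ a, f a) * ∑ b, g b := by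
  rw [Finset.sum_mul_sum, ← Fintype.sum_prod_type']
  exact (kronIdx m p).sum_comp fun q => f q.1 * g q.2

lemma kronPow_mulVec_elemTensor (A : Mat m) (x : Fin p → EucSp m) :
    kronPow A p *ᵥ elemTensor x = elemTensor fun t => Matrix.toEuclideanLin A (x t) := by
  induction p with
  | zero => exact Matrix.one_mulVec _
  | succ p ih =>
    funext i
    calc (kronPow A (p + 1) *ᵥ elemTensor x) i
        = (kronPow A p *ᵥ elemTensor (Fin.init x)) (kronIdx m p i).1 *
            (A *ᵥ x (Fin.last p)) (kronIdx m p i).2 := by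
          simp only [Matrix.mulVec, dotProduct, ← sum_kronIdx_mul, kronPow_succ_apply,
            elemTensor_succ_apply, mul_mul_mul_comm]
      _ = elemTensor (fun t => Matrix.toEuclideanLin A (x t)) i := by
          rw [ih, elemTensor_succ_apply, Matrix.toLpLin_apply]
          rfl

lemma elemTensor_dotProduct (f x : Fin p → EucSp m) :
    elemTensor f ⬝ᵥ elemTensor x = ∏ t, ⟪f t, x t⟫ := by
  induction p with
  | zero =>
    calc elemTensor f ⬝ᵥ elemTensor x = (Fintype.card (Fin (m ^ 0)) : ℝ) := by
          simp only [dotProduct, elemTensor, mul_one, Finset.sum_const, Finset.card_univ,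
            nsmul_eq_mul]
      _ = ∏ t, ⟪f t, x t⟫ := by
          rw [Fintype.card_fin]
          simp
  | succ p ih =>
    have hlast : ∑ b, f (Fin.last p) b * x (Fin.last p) b = ⟪f (Fin.last p), x (Fin.last p)⟫ := by
      simp [PiLp.inner_apply, mul_comm]
    rw [Fin.prod_univ_castSucc, ← hlast]
    calc elemTensor f ⬝ᵥ elemTensor x
        = (elemTensor (Fin.init f) ⬝ᵥ elemTensor (Fin.init x)) *
            ∑ b, f (Fin.last p) b * x (Fin.last p) b := by
          simp only [dotProduct, ← sum_kronIdx_mul, elemTensor_succ_apply, mul_mul_mul_comm]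
      _ = _ := by rw [ih]; rfl

lemma abs_elemTensor_le (x : Fin p → EucSp m) (i : Fin (m ^ p)) :
    |elemTensor x i| ≤ ∏ t, ‖x t‖ := by
  induction p with
  | zero => simp [elemTensor]
  | succ p ih =>
    rw [elemTensor_succ_apply, abs_mul, Fin.prod_univ_castSucc]
    exact mul_le_mul (ih _ _) (PiLp.norm_apply_le (x (Fin.last p)) _) (abs_nonneg _)
      (Finset.prod_nonneg fun _ _ => norm_nonneg _)

lemma exists_elemTensor_eq_single (j : Fin (m ^ p)) :
    ∃ x : Fin p → EucSp m, elemTensor x = Pi.single j 1 := by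
  induction p with
  | zero =>
    have : Unique (Fin (m ^ 0)) := (finCongr (pow_zero m)).unique
    exact ⟨Fin.elim0, funext fun i => by simp [elemTensor, Subsingleton.elim i j]⟩
  | succ p ih =>
    obtain ⟨x, hx⟩ := ih (kronIdx m p j).1
    refine ⟨Fin.snoc x (EuclideanSpace.single (kronIdx m p j).2 1), funext fun i => ?_⟩
    rw [elemTensor_succ_apply, Fin.init_snoc, Fin.snoc_last, hx]
    simp only [Pi.single_apply, PiLp.single_apply, ← ite_and, mul_ite, mul_one, mul_zero,
      ← (kronIdx m p).injective.eq_iff (a := i), Prod.ext_iff, and_comm]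

lemma continuous_kronPow_apply (i j : Fin (m ^ p)) :
    Continuous fun A : Mat m => kronPow A p i j := by
  induction p with
  | zero => exact continuous_const
  | succ p ih =>
    simp only [kronPow_succ_apply]
    exact (ih _ _).mul (continuous_id.matrix_elem _ _)

lemma abs_kronPow_apply_le (A : Mat m) (i j : Fin (m ^ p)) :
    |kronPow A p i j| ≤ opNorm A ^ p := by
  induction p with
  | zero =>
    rw [kronPow, Matrix.one_apply, pow_zero (opNorm A)]
    split_ifs <;> simp
  | succ p ih =>
    rw [kronPow_succ_apply, abs_mul, pow_succ (opNorm A)]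
    exact mul_le_mul (ih _ _) (abs_apply_le_opNorm A _ _) (abs_nonneg _)
      (pow_nonneg (opNorm_nonneg A) p)

end ElementaryTensors

/-! ### The expectation of a Kronecker power -/

section Expectation

instance matSecondCountableTopology (m : ℕ) : SecondCountableTopology (Mat m) :=
  inferInstanceAs (SecondCountableTopology (Fin m → Fin m → ℝ))

instance matBorelSpace (m : ℕ) : BorelSpace (Mat m) :=
  inferInstanceAs (BorelSpace (Fin m → Fin m → ℝ))

variable {m p : ℕ} {μ : Measure (Mat m)}

lemma continuous_toEuclideanLin_uncurry (m : ℕ) :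
    Continuous fun q : EucSp m × Mat m => Matrix.toEuclideanLin q.2 q.1 := by
  simp only [Matrix.toLpLin_apply]
  exact (PiLp.continuous_toLp 2 _).comp
    (continuous_snd.matrix_mulVec ((PiLp.continuous_ofLp 2 _).comp continuous_fst))

lemma continuous_toEuclideanLin_apply (x : EucSp m) :
    Continuous fun A : Mat m => Matrix.toEuclideanLin A x :=
  (continuous_toEuclideanLin_uncurry m).comp (continuous_const.prodMk continuous_id)

lemma continuous_opNorm (m : ℕ) : Continuous fun A : Mat m => opNorm A := by
  let L : Mat m →ₗ[ℝ] (EucSp m →L[ℝ] EucSp m) :=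
    (LinearMap.toContinuousLinearMap : (EucSp m →ₗ[ℝ] EucSp m) ≃ₗ[ℝ] _).toLinearMap ∘ₗ
      (Matrix.toEuclideanLin : Mat m ≃ₗ[ℝ] _).toLinearMap
  have hL : Continuous L := LinearMap.continuous_of_finiteDimensional (E := Mat m) L
  exact hL.norm

lemma ae_mem_msupport (μ : Measure (Mat m)) : ∀ᵐ A ∂μ, A ∈ msupport μ := by
  refine measure_null_of_locally_null _ fun A hA => ?_
  obtain ⟨ε, hε, hball⟩ : ∃ ε : ℝ, 0 < ε ∧ μ {B | opNorm (B - A) < ε} = 0 := by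
    simpa [msupport] using hA
  have hcont : Continuous fun B => opNorm (B - A) :=
    (continuous_opNorm m).comp (continuous_id.sub continuous_const)
  refine ⟨_, mem_nhdsWithin_of_mem_nhds ((isOpen_lt hcont continuous_const).mem_nhds ?_), hball⟩
  simpa [opNorm] using hε

lemma HasBoundedSupport.exists_nonneg (hμ : HasBoundedSupport μ) :
    ∃ C, 0 ≤ C ∧ ∀ A ∈ msupport μ, opNorm A ≤ C :=
  hμ.elim fun C hC => ⟨max C 0, le_max_right C 0, fun A hA => (hC A hA).trans (le_max_left C 0)⟩

lemma integrable_kronPow_apply [IsFiniteMeasure μ] (hμ : HasBoundedSupport μ)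
    (i j : Fin (m ^ p)) : Integrable (fun A => kronPow A p i j) μ := by
  obtain ⟨C, hC⟩ := hμ
  refine Integrable.of_bound (continuous_kronPow_apply i j).aestronglyMeasurable (C ^ p) ?_
  filter_upwards [ae_mem_msupport μ] with A hA
  exact (abs_kronPow_apply_le A i j).trans (by gcongr; exacts [opNorm_nonneg A, hC A hA])

lemma integrable_and_integral_dotProduct_kronPow [IsFiniteMeasure μ] (hμ : HasBoundedSupport μ)
    (φ x : Fin (m ^ p) → ℝ) :
    Integrable (fun A => φ ⬝ᵥ kronPow A p *ᵥ x) μ ∧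
      ∫ A, φ ⬝ᵥ kronPow A p *ᵥ x ∂μ = φ ⬝ᵥ kronExp μ p *ᵥ x := by
  have hint : ∀ i j, Integrable (fun A => φ i * (kronPow A p i j * x j)) μ := fun i j =>
    ((integrable_kronPow_apply hμ i j).mul_const _).const_mul _
  simp only [dotProduct, Matrix.mulVec, Finset.mul_sum]
  refine ⟨integrable_finsetSum _ fun i _ => integrable_finsetSum _ fun j _ => hint i j, ?_⟩
  rw [integral_finsetSum _ fun i _ => integrable_finsetSum _ fun j _ => hint i j]
  refine Finset.sum_congr rfl fun i _ => ?_
  rw [integral_finsetSum _ fun j _ => hint i j]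
  refine Finset.sum_congr rfl fun j _ => ?_
  rw [integral_const_mul, integral_mul_const]
  rfl

lemma integrable_dotProduct_kronExp_pow_mulVec [IsFiniteMeasure μ] (hμ : HasBoundedSupport μ)
    (φ : Fin (m ^ p) → ℝ) (k : ℕ) (x : Fin p → EucSp m) :
    Integrable (fun A => φ ⬝ᵥ kronExp μ p ^ k *ᵥ
      elemTensor fun t => Matrix.toEuclideanLin A (x t)) μ := by
  simpa only [Matrix.dotProduct_mulVec φ (kronExp μ p ^ k), kronPow_mulVec_elemTensor] using
    (integrable_and_integral_dotProduct_kronPow hμ (φ ᵥ* kronExp μ p ^ k) (elemTensor x)).1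

lemma dotProduct_kronExp_pow_succ_mulVec [IsFiniteMeasure μ] (hμ : HasBoundedSupport μ)
    (φ : Fin (m ^ p) → ℝ) (k : ℕ) (x : Fin p → EucSp m) :
    φ ⬝ᵥ kronExp μ p ^ (k + 1) *ᵥ elemTensor x =
      ∫ A, φ ⬝ᵥ kronExp μ p ^ k *ᵥ elemTensor (fun t => Matrix.toEuclideanLin A (x t)) ∂μ := by
  simp only [← kronPow_mulVec_elemTensor, Matrix.dotProduct_mulVec φ (kronExp μ p ^ k),
    (integrable_and_integral_dotProduct_kronPow hμ _ (elemTensor x)).2]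
  rw [← Matrix.dotProduct_mulVec, Matrix.mulVec_mulVec, pow_succ]

lemma abs_dotProduct_kronExp_pow_mulVec_le [IsProbabilityMeasure μ] (hμ : HasBoundedSupport μ)
    (φ : Fin (m ^ p) → ℝ) (k : ℕ) (x : Fin p → EucSp m) (b : Fin p → ℝ)
    (hb : ∀ t, ∀ f : Fin k → Mat m, (∀ i, f i ∈ msupport μ) →
      ‖Matrix.toEuclideanLin (prodRev f) (x t)‖ ≤ b t) :
    |φ ⬝ᵥ kronExp μ p ^ k *ᵥ elemTensor x| ≤ (∑ i, |φ i|) * ∏ t, b t := by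
  induction k generalizing x with
  | zero =>
    rw [pow_zero, Matrix.one_mulVec, dotProduct, Finset.sum_mul]
    refine (Finset.abs_sum_le_sum_abs _ _).trans (Finset.sum_le_sum fun i _ => ?_)
    rw [abs_mul]
    gcongr
    refine (abs_elemTensor_le x i).trans (Finset.prod_le_prod (fun _ _ => norm_nonneg _) ?_)
    intro t _
    simpa [prodRev] using hb t Fin.elim0 fun i => i.elim0
  | succ k ih =>
    rw [dotProduct_kronExp_pow_succ_mulVec hμ]
    calc ‖∫ A, φ ⬝ᵥ kronExp μ p ^ k *ᵥ elemTensor (fun t => Matrix.toEuclideanLin A (x t)) ∂μ‖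
        ≤ (∑ i, |φ i|) * (∏ t, b t) * μ.real Set.univ := norm_integral_le_of_norm_le_const ?_
      _ = (∑ i, |φ i|) * ∏ t, b t := by rw [probReal_univ, mul_one]
    filter_upwards [ae_mem_msupport μ] with A hA
    refine ih _ fun t f hf => ?_
    rw [← toEuclideanLin_mul, ← prodRev_cons]
    exact hb t _ (Fin.cases hA hf)

theorem specRad_kronExp_le [IsProbabilityMeasure μ] (hμ : HasBoundedSupport μ) {s : ℝ}
    (hs : jsr (msupport μ) < s) : specRad (kronExp μ p) ≤ s ^ p := by
  obtain ⟨C, hC, hsupp⟩ := hμ.exists_nonneg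
  have hs0 : 0 < s := (jsr_nonneg hC hsupp).trans_lt hs
  refine specRad_le_of_isBigO_pow (pow_pos hs0 p) fun i j => ?_
  obtain ⟨x, hx⟩ := exists_elemTensor_eq_single (p := p) j
  let φ : Fin (m ^ p) → ℝ := Pi.single i 1
  refine Asymptotics.IsBigO.of_bound ((∑ l, |φ l|) * ∏ t, ‖x t‖) ?_
  filter_upwards [eventually_opNorm_prodRev_le hC hsupp hs] with k hk
  calc ‖(kronExp μ p ^ k) i j‖ = |φ ⬝ᵥ kronExp μ p ^ k *ᵥ elemTensor x| := by
        simp [φ, hx]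
    _ ≤ (∑ l, |φ l|) * ∏ t, s ^ k * ‖x t‖ :=
        abs_dotProduct_kronExp_pow_mulVec_le hμ φ k x _ fun t f hf =>
          (norm_toEuclideanLin_le _ _).trans (by gcongr; exact hk f hf)
    _ = (∑ l, |φ l|) * (∏ t, ‖x t‖) * ‖(s ^ p) ^ k‖ := by
        rw [Finset.prod_mul_distrib, Finset.prod_const, Finset.card_univ, Fintype.card_fin,
          pow_right_comm, Real.norm_of_nonneg (by positivity), mul_assoc, mul_comm (∏ t, ‖x t‖)]

end Expectation

/-! ### Seminorms contracted in mean -/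

section PowSeminorm

variable {E F α : Type*} [AddCommGroup E] [Module ℝ E] [AddCommGroup F] [Module ℝ F] {p : ℕ}

/-- `V` is the `p`-th power of a seminorm that may take the value `∞`. -/
structure IsPowSeminorm (p : ℕ) (V : E → ℝ≥0∞) : Prop where
  smul : ∀ (c : ℝ) x, V (c • x) = ‖c‖ₑ ^ p * V x
  add_le : ∀ x y, V (x + y) ^ (p : ℝ)⁻¹ ≤ V x ^ (p : ℝ)⁻¹ + V y ^ (p : ℝ)⁻¹

namespace IsPowSeminorm

lemma enorm_pow {E : Type*} [NormedAddCommGroup E] [NormedSpace ℝ E] (hp : p ≠ 0) :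
    IsPowSeminorm p fun x : E => ‖x‖ₑ ^ p where
  smul c x := by rw [enorm_smul, mul_pow]
  add_le x y := by
    simp only [ENNReal.pow_rpow_inv_natCast hp]
    exact enorm_add_le x y

lemma comp {V : F → ℝ≥0∞} (hV : IsPowSeminorm p V) (A : E →ₗ[ℝ] F) :
    IsPowSeminorm p fun x => V (A x) where
  smul c x := by rw [map_smul, hV.smul]
  add_le x y := by
    rw [map_add]
    exact hV.add_le _ _

lemma const_mul {V : E → ℝ≥0∞} (hV : IsPowSeminorm p V) (c : ℝ≥0∞) :
    IsPowSeminorm p fun x => c * V x where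
  smul a x := by rw [hV.smul, mul_left_comm]
  add_le x y := by
    simp only [ENNReal.mul_rpow_of_nonneg _ _ (inv_nonneg.2 (Nat.cast_nonneg p)), ← mul_add]
    gcongr
    exact hV.add_le x y

lemma lintegral [MeasurableSpace α] {μ : Measure α} (hp : p ≠ 0) {V : α → E → ℝ≥0∞}
    (hV : ∀ a, IsPowSeminorm p (V a)) (hmeas : ∀ x, Measurable fun a => V a x) :
    IsPowSeminorm p fun x => ∫⁻ a, V a x ∂μ where
  smul c x := by
    simp only [(hV _).smul]
    exact lintegral_const_mul' _ _ (ENNReal.pow_ne_top enorm_ne_top)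
  add_le x y := by
    have hroot : ∀ c : ℝ≥0∞, (c ^ (p : ℝ)⁻¹) ^ (p : ℝ) = c := fun c => by
      rw [← ENNReal.rpow_mul, inv_mul_cancel₀ (Nat.cast_ne_zero.2 hp), ENNReal.rpow_one]
    have hminkowski := ENNReal.lintegral_Lp_add_le (μ := μ) (p := p)
      ((hmeas x).pow_const (p : ℝ)⁻¹).aemeasurable ((hmeas y).pow_const (p : ℝ)⁻¹).aemeasurable
      (by exact_mod_cast Nat.one_le_iff_ne_zero.2 hp)
    simp only [hroot, one_div] at hminkowski
    refine le_trans ?_ hminkowski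
    gcongr with a
    rw [← hroot (V a (x + y))]
    gcongr
    exact (hV a).add_le x y

lemma tsum (hp : p ≠ 0) {V : ℕ → E → ℝ≥0∞} (hV : ∀ k, IsPowSeminorm p (V k)) :
    IsPowSeminorm p fun x => ∑' k, V k x := by
  simpa only [lintegral_count] using
    IsPowSeminorm.lintegral (μ := Measure.count) hp hV fun _ => measurable_of_countable _

lemma sub_ne_top {V : E → ℝ≥0∞} (hV : IsPowSeminorm p V) (hp : p ≠ 0) {x y : E}
    (hx : V x ≠ ∞) (hy : V y ≠ ∞) : V (x - y) ≠ ∞ := by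
  have hp0 : (0 : ℝ) < (p : ℝ)⁻¹ := by positivity
  have hneg : V (-y) ≠ ∞ := by
    rw [← neg_one_smul ℝ y, hV.smul]
    exact ENNReal.mul_ne_top (ENNReal.pow_ne_top enorm_ne_top) hy
  have hle := hV.add_le x (-y)
  rw [← sub_eq_add_neg] at hle
  exact fun htop => ne_top_of_le_ne_top (ENNReal.add_ne_top.2
    ⟨ENNReal.rpow_ne_top_of_nonneg hp0.le hx, ENNReal.rpow_ne_top_of_nonneg hp0.le hneg⟩) hle
      (by rw [htop, ENNReal.top_rpow_of_pos hp0])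

lemma exists_seminorm {V : E → ℝ≥0∞} (hV : IsPowSeminorm p V) (hp : p ≠ 0)
    (hfin : ∀ x, V x ≠ ∞) : ∃ v : Seminorm ℝ E, ∀ x, ENNReal.ofReal (v x) ^ p = V x := by
  have hroot : ∀ x, V x ^ (p : ℝ)⁻¹ ≠ ∞ := fun x =>
    ENNReal.rpow_ne_top_of_nonneg (by positivity) (hfin x)
  refine ⟨Seminorm.of (fun x => (V x ^ (p : ℝ)⁻¹).toReal) (fun x y => ?_) fun c x => ?_,
    fun x => ?_⟩
  · rw [← ENNReal.toReal_add (hroot x) (hroot y)]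
    exact ENNReal.toReal_mono (ENNReal.add_ne_top.2 ⟨hroot x, hroot y⟩) (hV.add_le x y)
  · rw [hV.smul, ENNReal.mul_rpow_of_nonneg _ _ (by positivity),
      ENNReal.pow_rpow_inv_natCast hp, ENNReal.toReal_mul, toReal_enorm]
  · change ENNReal.ofReal (V x ^ (p : ℝ)⁻¹).toReal ^ p = V x
    rw [ENNReal.ofReal_toReal (hroot x), ENNReal.rpow_inv_natCast_pow hp]

end IsPowSeminorm

end PowSeminorm

section MeanContraction

variable {m p : ℕ} {μ : Measure (Mat m)} {r : ℝ}

/-- The mean `E ‖A_k ⋯ A_1 x‖ ^ p` over independent `A_1, …, A_k` with law `μ`, as an iterated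
integral. -/
def iterMean (μ : Measure (Mat m)) (p : ℕ) : ℕ → EucSp m → ℝ≥0∞
  | 0 => fun x => ‖x‖ₑ ^ p
  | k + 1 => fun x => ∫⁻ A, iterMean μ p k (Matrix.toEuclideanLin A x) ∂μ

lemma measurable_iterMean (μ : Measure (Mat m)) [SFinite μ] (p k : ℕ) :
    Measurable (iterMean μ p k) := by
  induction k with
  | zero => exact measurable_enorm.pow_const p
  | succ k ih =>
    exact (ih.comp (continuous_toEuclideanLin_uncurry m).measurable).lintegral_prod_right'

lemma measurable_iterMean_toEuclideanLin (μ : Measure (Mat m)) [SFinite μ] (p k : ℕ)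
    (x : EucSp m) : Measurable fun A : Mat m => iterMean μ p k (Matrix.toEuclideanLin A x) :=
  (measurable_iterMean μ p k).comp (continuous_toEuclideanLin_apply x).measurable

lemma isPowSeminorm_iterMean (μ : Measure (Mat m)) [SFinite μ] (hp : p ≠ 0) (k : ℕ) :
    IsPowSeminorm p (iterMean μ p k) := by
  induction k with
  | zero => exact .enorm_pow hp
  | succ k ih =>
    exact .lintegral hp (fun A => ih.comp (Matrix.toEuclideanLin A))
      (measurable_iterMean_toEuclideanLin μ p k)

/-- The discounted sum of the means `E ‖A_k ⋯ A_1 x‖ ^ p`: where finite, the `p`-th power of a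
norm contracted in mean. -/
def discountedMean (μ : Measure (Mat m)) (p : ℕ) (c : ℝ≥0∞) (x : EucSp m) : ℝ≥0∞ :=
  ∑' k, c ^ k * iterMean μ p k x

lemma isPowSeminorm_discountedMean (μ : Measure (Mat m)) [SFinite μ] (hp : p ≠ 0) (c : ℝ≥0∞) :
    IsPowSeminorm p (discountedMean μ p c) :=
  .tsum hp fun k => (isPowSeminorm_iterMean μ hp k).const_mul (c ^ k)

lemma enorm_pow_le_discountedMean (μ : Measure (Mat m)) (p : ℕ) (c : ℝ≥0∞) (x : EucSp m) :
    ‖x‖ₑ ^ p ≤ discountedMean μ p c x := by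
  simpa [discountedMean, iterMean] using ENNReal.le_tsum (f := fun k => c ^ k * iterMean μ p k x) 0

lemma mul_lintegral_discountedMean_le (μ : Measure (Mat m)) [SFinite μ] (p : ℕ) (c : ℝ≥0∞)
    (x : EucSp m) :
    c * ∫⁻ A, discountedMean μ p c (Matrix.toEuclideanLin A x) ∂μ ≤ discountedMean μ p c x := by
  have hmeas := fun k => measurable_iterMean_toEuclideanLin μ p k x
  calc c * ∫⁻ A, ∑' k, c ^ k * iterMean μ p k (Matrix.toEuclideanLin A x) ∂μ
      = ∑' k : ℕ, c ^ (k + 1) * iterMean μ p (k + 1) x := by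
        rw [lintegral_tsum fun k => ((hmeas k).const_mul _).aemeasurable, ← ENNReal.tsum_mul_left]
        refine tsum_congr fun k => ?_
        rw [lintegral_const_mul _ (hmeas k), pow_succ', mul_assoc]
        rfl
    _ ≤ discountedMean μ p c x := ENNReal.tsum_comp_le_tsum_of_injective (add_left_injective 1)
        fun k => c ^ k * iterMean μ p k x

/-- The norm `v` is contracted by the factor `r` in `p`-mean: `E v(Ax)^p ≤ (r v(x))^p`. -/
structure IsMeanContracted (μ : Measure (Mat m)) (r : ℝ) (p : ℕ) (v : Seminorm ℝ (EucSp m)) :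
    Prop where
  isDefinite : IsDefinite v
  lintegral_le : ∀ x, ∫⁻ A, ENNReal.ofReal (v (Matrix.toEuclideanLin A x)) ^ p ∂μ ≤
    ENNReal.ofReal (r * v x) ^ p

lemma exists_isMeanContracted [SFinite μ] (hp : p ≠ 0) (hr : 0 < r)
    (hfin : ∀ x, discountedMean μ p (ENNReal.ofReal r ^ p)⁻¹ x ≠ ∞) :
    ∃ v, IsMeanContracted μ r p v := by
  obtain ⟨v, hv⟩ := (isPowSeminorm_discountedMean μ hp _).exists_seminorm hp hfin
  have hr0 : ENNReal.ofReal r ^ p ≠ 0 := pow_ne_zero p (ENNReal.ofReal_pos.2 hr).ne'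
  refine ⟨v, fun x hx => ?_, fun x => ?_⟩
  · have hle := enorm_pow_le_discountedMean μ p (ENNReal.ofReal r ^ p)⁻¹ x
    simpa [← hv, hx, hp] using hle
  · rw [ENNReal.ofReal_mul hr.le, mul_pow]
    simp only [hv]
    exact (ENNReal.inv_mul_le_iff hr0 (ENNReal.pow_ne_top ENNReal.ofReal_ne_top)).1
      (mul_lintegral_discountedMean_le μ p _ x)

lemma frequently_ae_le_of_lintegral_pow_le {α : Type*} [MeasurableSpace α] {μ : Measure α}
    {f : α → ℝ} {B : Set α} {a b : ℝ}
    (hf : ∫⁻ ω, ENNReal.ofReal (f ω) ^ p ∂μ ≤ ENNReal.ofReal a ^ p)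
    (hB : ENNReal.ofReal a ^ p < ENNReal.ofReal b ^ p * μ B) : ∃ᵐ ω ∂μ.restrict B, f ω ≤ b := by
  intro hlt
  refine hB.not_ge (le_trans ?_ hf)
  calc ENNReal.ofReal b ^ p * μ B = ∫⁻ _ in B, ENNReal.ofReal b ^ p ∂μ :=
        (setLIntegral_const B _).symm
    _ ≤ ∫⁻ ω in B, ENNReal.ofReal (f ω) ^ p ∂μ := by
        refine lintegral_mono_ae ?_
        filter_upwards [hlt] with ω hω
        gcongr
        exact (not_le.1 hω).le
    _ ≤ ∫⁻ ω, ENNReal.ofReal (f ω) ^ p ∂μ := setLIntegral_le_lintegral B _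

/- By Markov's inequality the matrices expanding `v i` at `x` by more than `r'` have probability
at most `(r / r') ^ p i`, which is eventually smaller than that of any ball around `A ∈ supp μ`. -/
lemma isAsymptoticallyContracted_of_isMeanContracted {ι : Type*} {l : Filter ι} {p : ι → ℕ}
    {v : ι → Seminorm ℝ (EucSp m)} {r' : ℝ} (hr : 0 ≤ r) (hrr' : r < r')
    (hp : Tendsto p l atTop) (hv : ∀ i, IsMeanContracted μ r (p i) (v i)) :
    IsAsymptoticallyContracted l v
      (fun A : msupport μ => (Matrix.toEuclideanLin (A : Mat m) : EucSp m →ₗ[ℝ] EucSp m)) r' := by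
  rintro ⟨A, hA⟩ x δ hδ
  rcases eq_or_ne x 0 with rfl | hx
  · exact Eventually.of_forall fun i => ⟨⟨A, hA⟩, by simp [hδ.le]⟩
  have hr' : 0 < r' := hr.trans_lt hrr'
  let B : Set (Mat m) := {B | opNorm (B - A) < δ / ‖x‖}
  have hB : μ B ≠ 0 := hA _ (by positivity)
  have hcont : Continuous fun B => opNorm (B - A) :=
    (continuous_opNorm m).comp (continuous_id.sub continuous_const)
  have hBmeas : MeasurableSet B := (isOpen_lt hcont continuous_const).measurableSet
  have hlim : Tendsto (fun i => ENNReal.ofReal (r / r') ^ p i) l (𝓝 0) :=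
    (ENNReal.tendsto_pow_atTop_nhds_zero_of_lt_one
      (ENNReal.ofReal_lt_one.2 ((div_lt_one hr').2 hrr'))).comp hp
  filter_upwards [hlim.eventually_lt_const (pos_iff_ne_zero.2 hB)] with i hi
  have hvx : 0 < r' * v i x := mul_pos hr' ((hv i).isDefinite.pos hx)
  have hmarkov : ENNReal.ofReal (r * v i x) ^ p i < ENNReal.ofReal (r' * v i x) ^ p i * μ B := by
    have hsplit : r * v i x = r' * v i x * (r / r') := by field_simp
    rw [hsplit, ENNReal.ofReal_mul hvx.le, mul_pow]
    exact ENNReal.mul_lt_mul_right (by positivity) (by finiteness) hi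
  obtain ⟨D, hD, hDB, hDsupp⟩ :=
    ((frequently_ae_le_of_lintegral_pow_le ((hv i).lintegral_le x) hmarkov).and_eventually
      ((ae_restrict_mem hBmeas).and (ae_restrict_of_ae (ae_mem_msupport μ)))).exists
  refine ⟨⟨D, hDsupp⟩, ?_, hD⟩
  calc ‖Matrix.toEuclideanLin D x - Matrix.toEuclideanLin A x‖
      = ‖Matrix.toEuclideanLin (D - A) x‖ := by rw [map_sub, LinearMap.sub_apply]
    _ ≤ opNorm (D - A) * ‖x‖ := norm_toEuclideanLin_le _ x
    _ ≤ δ := ((lt_div_iff₀ (norm_pos_iff.2 hx)).1 hDB).le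

theorem jsr_le_of_frequently_isMeanContracted (hμ : HasBoundedSupport μ) (hr : 0 ≤ r)
    (h : ∃ᶠ p in atTop, ∃ v, IsMeanContracted μ r p v) : jsr (msupport μ) ≤ r := by
  refine le_of_forall_gt_imp_ge_of_dense fun r' hrr' => ?_
  obtain ⟨C, hC, hsupp⟩ := hμ.exists_nonneg
  obtain ⟨s, hrs, hsr'⟩ := exists_between hrr'
  obtain ⟨p, hp, hv⟩ := extraction_of_frequently_atTop h
  choose v hv using hv
  obtain ⟨N, hN_def, hN⟩ := exists_contracted_norm (fun i => (hv i).isDefinite)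
    (isAsymptoticallyContracted_of_isMeanContracted hr hrs hp.tendsto_atTop hv) hsr' hC
    fun A x => (norm_toEuclideanLin_le _ x).trans (by gcongr; exact hsupp A A.2)
  exact jsr_le_of_contracted_norm (hr.trans hrr'.le) hN_def fun A hA => hN ⟨A, hA⟩

end MeanContraction

/-! ### Proper cones -/

section Cones

variable {m : ℕ} {K : Set (EucSp m)}

lemma IsProperCone.zero_mem (hK : IsProperCone K) : 0 ∈ K := by
  obtain ⟨x, hx⟩ := hK.solid
  simpa using hK.smul_mem 0 le_rfl x (interior_subset hx)

lemma IsProperCone.exists_inner_pos (hK : IsProperCone K) {x : EucSp m} (hx : x ∈ K)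
    (hx0 : x ≠ 0) : ∃ f ∈ dualConeSet K, 0 < ⟪f, x⟫ := by
  obtain ⟨g, u, hgu, hg⟩ := geometric_hahn_banach_point_closed hK.convex hK.isClosed
    fun h => hx0 (hK.pointed x hx h)
  have hu : u < 0 := by simpa using hg 0 hK.zero_mem
  refine ⟨(InnerProductSpace.toDual ℝ (EucSp m)).symm g, fun y hy => ?_, ?_⟩
  · rw [InnerProductSpace.toDual_symm_apply]
    by_contra! hneg
    have hlt := hg _ (hK.smul_mem (u / g y) (div_nonneg_of_nonpos hu.le hneg.le) y hy)
    rw [map_smul, smul_eq_mul, div_mul_cancel₀ _ hneg.ne] at hlt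
    exact lt_irrefl _ hlt
  · rw [InnerProductSpace.toDual_symm_apply]
    rw [map_neg] at hgu
    linarith

lemma IsProperCone.exists_forall_inner_pos (hK : IsProperCone K) :
    ∃ f, ∀ x ∈ K, x ≠ 0 → 0 < ⟪f, x⟫ := by
  let S : Set (EucSp m) := Metric.sphere 0 1 ∩ K
  choose! F hF hFpos using fun x (hx : x ∈ S) =>
    hK.exists_inner_pos hx.2 (ne_zero_of_mem_unit_sphere ⟨x, hx.1⟩)
  obtain ⟨t, ht, hcover⟩ := ((isCompact_sphere _ _).inter_right hK.isClosed).elim_nhds_subcover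
    (fun x => {y | 0 < ⟪F x, y⟫}) fun x hx =>
      (isOpen_lt continuous_const (continuous_const.inner continuous_id)).mem_nhds (hFpos x hx)
  refine ⟨∑ x ∈ t, F x, fun y hy hy0 => ?_⟩
  have hyK : ‖y‖⁻¹ • y ∈ K := hK.smul_mem _ (by positivity) y hy
  obtain ⟨x, hxt, hxy⟩ := Set.mem_iUnion₂.1 (hcover ⟨by simp [norm_smul, hy0], hyK⟩)
  have hpos : 0 < ⟪∑ x ∈ t, F x, ‖y‖⁻¹ • y⟫ := by
    rw [sum_inner]
    exact Finset.sum_pos' (fun x hx => hF x (ht x hx) _ hyK) ⟨x, hxt, hxy⟩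
  rw [real_inner_smul_right] at hpos
  exact pos_of_mul_pos_right hpos (by positivity)

lemma IsProperCone.exists_norm_le_inner (hK : IsProperCone K) : ∃ f, ∀ x ∈ K, ‖x‖ ≤ ⟪f, x⟫ := by
  obtain ⟨f, hf⟩ := hK.exists_forall_inner_pos
  obtain ⟨c, -, hc⟩ := exists_norm_le_mul_of_pos hK.isClosed hK.smul_mem
    (continuous_const.inner continuous_id) (fun c _ x => real_inner_smul_right f x c) hf
  exact ⟨c • f, fun x hx => (hc x hx).trans_eq (real_inner_smul_left f x c).symm⟩

lemma IsProperCone.exists_sub (hK : IsProperCone K) (x : EucSp m) :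
    ∃ a ∈ K, ∃ b ∈ K, x = a - b := by
  obtain ⟨z, hz⟩ := hK.solid
  have hcont : Continuous fun t : ℝ => z + t • x := by fun_prop
  have hlim : Tendsto (fun t : ℝ => z + t • x) (𝓝[>] 0) (𝓝 z) := by
    simpa using (hcont.tendsto 0).mono_left nhdsWithin_le_nhds
  obtain ⟨t, htK, ht⟩ :=
    ((hlim.eventually (mem_interior_iff_mem_nhds.1 hz)).and self_mem_nhdsWithin).exists
  have ht0 : 0 < t := ht
  refine ⟨t⁻¹ • (z + t • x), hK.smul_mem _ (by positivity) _ htK, t⁻¹ • z,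
    hK.smul_mem _ (by positivity) _ (interior_subset hz), ?_⟩
  rw [smul_add, smul_smul, inv_mul_cancel₀ ht0.ne', one_smul, add_sub_cancel_left]

variable {p : ℕ} {μ : Measure (Mat m)} {f x : EucSp m} {r : ℝ}

lemma iterMean_le_of_mem_cone [IsFiniteMeasure μ] (hμ : HasBoundedSupport μ)
    (hinv : SetLeavesInv (msupport μ) K) (hf : ∀ x ∈ K, ‖x‖ ≤ ⟪f, x⟫) (hx : x ∈ K) (k : ℕ) :
    0 ≤ (elemTensor fun _ : Fin p => f) ⬝ᵥ kronExp μ p ^ k *ᵥ elemTensor (fun _ => x) ∧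
      iterMean μ p k x ≤ ENNReal.ofReal
        ((elemTensor fun _ => f) ⬝ᵥ kronExp μ p ^ k *ᵥ elemTensor fun _ => x) := by
  induction k generalizing x with
  | zero =>
    have hfx : 0 ≤ ⟪f, x⟫ := (norm_nonneg x).trans (hf x hx)
    rw [pow_zero, Matrix.one_mulVec, elemTensor_dotProduct, Finset.prod_const, Finset.card_univ,
      Fintype.card_fin, ENNReal.ofReal_pow hfx]
    refine ⟨pow_nonneg hfx p, ?_⟩
    simp only [iterMean, ← ofReal_norm]
    gcongr
    exact hf x hx
  | succ k ih =>
    have hAx : ∀ᵐ A ∂μ, Matrix.toEuclideanLin A x ∈ K :=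
      (ae_mem_msupport μ).mono fun A hA => hinv A hA x hx
    have hnonneg := hAx.mono fun A hA => (ih hA).1
    rw [dotProduct_kronExp_pow_succ_mulVec hμ]
    refine ⟨integral_nonneg_of_ae hnonneg, ?_⟩
    rw [ofReal_integral_eq_lintegral_ofReal
      (integrable_dotProduct_kronExp_pow_mulVec hμ _ k _) hnonneg]
    exact lintegral_mono_ae (hAx.mono fun A hA => (ih hA).2)

lemma discountedMean_ne_top_of_mem_cone [IsFiniteMeasure μ] (hμ : HasBoundedSupport μ)
    (hK : IsProperCone K) (hinv : SetLeavesInv (msupport μ) K) (hr : 0 < r)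
    (hspec : specRad (kronExp μ p) < r ^ p) (hx : x ∈ K) :
    discountedMean μ p (ENNReal.ofReal r ^ p)⁻¹ x ≠ ∞ := by
  obtain ⟨f, hf⟩ := hK.exists_norm_le_inner
  obtain ⟨s, hs, hsr⟩ := exists_between hspec
  have hrp : 0 < r ^ p := pow_pos hr p
  let F : ℕ → ℝ := fun k =>
    (elemTensor fun _ => f) ⬝ᵥ kronExp μ p ^ k *ᵥ elemTensor fun _ => x
  have hsum : Summable fun k => (r ^ p)⁻¹ ^ k * F k := by
    refine summable_of_isBigO_nat (summable_geometric_of_lt_one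
      (div_nonneg ((specRad_nonneg _).trans hs.le) hrp.le) ((div_lt_one hrp).2 hsr)) ?_
    simp only [div_eq_inv_mul, mul_pow]
    exact (Asymptotics.isBigO_refl _ _).mul (isBigO_dotProduct_pow_mulVec hs _ _)
  refine ne_top_of_le_ne_top hsum.tsum_ofReal_ne_top (ENNReal.tsum_le_tsum fun k => ?_)
  rw [ENNReal.ofReal_mul (by positivity), ENNReal.ofReal_pow (by positivity),
    ENNReal.ofReal_inv_of_pos hrp, ENNReal.ofReal_pow hr.le]
  gcongr
  exact (iterMean_le_of_mem_cone hμ hinv hf hx k).2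

theorem jsr_le_of_frequently_specRad_lt [IsFiniteMeasure μ] (hμ : HasBoundedSupport μ)
    (hK : IsProperCone K) (hinv : SetLeavesInv (msupport μ) K) (hr : 0 < r)
    (h : ∃ᶠ p in atTop, specRad (kronExp μ p) < r ^ p) : jsr (msupport μ) ≤ r := by
  refine jsr_le_of_frequently_isMeanContracted hμ hr.le ?_
  refine (h.and_eventually (eventually_ne_atTop 0)).mono fun p ⟨hspec, hp⟩ => ?_
  refine exists_isMeanContracted hp hr fun x => ?_
  obtain ⟨a, ha, b, hb, rfl⟩ := hK.exists_sub x
  exact (isPowSeminorm_discountedMean μ hp _).sub_ne_top hp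
    (discountedMean_ne_top_of_mem_cone hμ hK hinv hr hspec ha)
    (discountedMean_ne_top_of_mem_cone hμ hK hinv hr hspec hb)

end Cones

lemma rpow_one_div_natCast_lt_iff {x y : ℝ} {p : ℕ} (hx : 0 ≤ x) (hy : 0 ≤ y) (hp : p ≠ 0) :
    x ^ ((1 : ℝ) / p) < y ↔ x < y ^ p := by
  rw [one_div, Real.rpow_inv_lt_iff_of_pos hx hy (by positivity), Real.rpow_natCast]

theorem stmt1_general (n : ℕ) (μ : Measure (Mat n)) [IsProbabilityMeasure μ]
    (hbdd : HasBoundedSupport μ)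
    (K : Set (EucSp n)) (hK : IsProperCone K) (hinv : SetLeavesInv (msupport μ) K) :
    Tendsto (fun p : ℕ => specRad (kronExp μ p) ^ ((1 : ℝ) / p)) atTop
      (𝓝 (jsr (msupport μ))) := by
  obtain ⟨C, hC, hsupp⟩ := hbdd.exists_nonneg
  refine tendsto_order.2 ⟨fun a ha => ?_, fun a ha => ?_⟩
  · by_contra hcon
    obtain ⟨r, har, hr⟩ := exists_between ha
    have hfreq : ∃ᶠ p : ℕ in atTop, specRad (kronExp μ p) ^ ((1 : ℝ) / p) < r :=
      (not_eventually.1 hcon).mono fun p hp => (not_lt.1 hp).trans_lt har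
    obtain ⟨p, hp⟩ := hfreq.exists
    have hr0 : 0 < r := (Real.rpow_nonneg (specRad_nonneg _) _).trans_lt hp
    refine hr.not_ge (jsr_le_of_frequently_specRad_lt hbdd hK hinv hr0 ?_)
    exact (hfreq.and_eventually (eventually_ne_atTop 0)).mono fun p hp =>
      (rpow_one_div_natCast_lt_iff (specRad_nonneg _) hr0.le hp.2).1 hp.1
  · obtain ⟨s, hs, hsa⟩ := exists_between ha
    have hs0 : 0 ≤ s := (jsr_nonneg hC hsupp).trans hs.le
    filter_upwards [eventually_ne_atTop 0] with p hp
    exact (rpow_one_div_natCast_lt_iff (specRad_nonneg _) (hs0.trans hsa.le) hp).2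
      ((specRad_kronExp_le hbdd hs).trans_lt (by gcongr))

/-- Under assumptions (A2) and (A3), the joint spectral radius of the support
of `μ` equals `lim_{p→∞} ρ(E[A^{⊗p}])^{1/p}`. -/
theorem stmt1 (n : ℕ) (hn : 1 ≤ n) (μ : Measure (Mat n)) [IsProbabilityMeasure μ]
    (hbdd : HasBoundedSupport μ)
    (K : Set (EucSp n)) (hK : IsProperCone K) (hinv : SetLeavesInv (msupport μ) K)
    (hsing : IsFiniteDiracComb (μ.singularPart (matLebesgue n))) :
    Tendsto (fun p : ℕ => specRad (kronExp μ p) ^ ((1 : ℝ) / p)) atTop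
      (𝓝 (jsr (msupport μ))) :=
  stmt1_general n μ hbdd K hK hinv

end
end

section
/- Let n ≥ 1, let μ be a Borel probability measure on ℝ^{n×n} with bounded support whose support leaves a proper cone K ⊆ ℝⁿ invariant, and let M = supp μ. For M ∈ ℝ^{n×n} write S_M := {A ∈ ℝ^{n×n} : A − M leaves K invariant}. Suppose N ⊆ M is a measurable nonempty set with the property that for every ε > 0 there exists δ > 0 such that μ(S_{(1−ε)M}) ≥ δ for every M ∈ N. Then ρ̂(N) ≤ lim_{p→∞} ρ_{p,μ}. -/
open MeasureTheory Filter Topology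
open scoped ENNReal RealInnerProductSpace

noncomputable section

/-!
The matrices leaving `K` invariant form a subsemiring of the matrix ring, so products are monotone
for the order `A ≤ B ↔ (B - A) K ⊆ K`. Since `K` is pointed and closed it is normal, and since it
also has interior points, the operator norm is monotone for this order up to a constant `c`.

Let `M₁, …, M_k ∈ N` and `0 < t < 1`. With probability at least `δ ^ k`, the independent random
matrices satisfy `t M_i ≤ A_i` for all `i`, and then `t ^ k ‖M_k ⋯ M₁‖ ≤ c ‖A_k ⋯ A₁‖`. Markov's
inequality turns this into `‖M_k ⋯ M₁‖ (t δ ^ (1 / p)) ^ k ≤ c (E ‖A_k ⋯ A₁‖ ^ p) ^ (1 / p)`. Taking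
`k`-th roots removes `c` as `k → ∞`, the factor `δ ^ (1 / p)` disappears as `p → ∞`, and finally
`t → 1`.
-/

section ListProducts

variable {ι R : Type*} {l : List ι}

lemma norm_list_prod_map_le_pow [SeminormedRing R] (h1 : ‖(1 : R)‖ ≤ 1) {f : ι → R} {C : ℝ}
    (hf : ∀ i ∈ l, ‖f i‖ ≤ C) : ‖(l.map f).prod‖ ≤ C ^ l.length := by
  induction l with
  | nil => simpa using h1
  | cons i l ih =>
    obtain ⟨hi, hl⟩ := List.forall_mem_cons.1 hf
    rw [List.map_cons, List.prod_cons, List.length_cons, pow_succ']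
    exact (norm_mul_le _ _).trans
      (mul_le_mul hi (ih hl) (norm_nonneg _) ((norm_nonneg _).trans hi))

lemma list_prod_map_sub_list_prod_map_mem [Ring R] {S : Type*} [SetLike S R]
    [SubsemiringClass S R] (P : S) {f g : ι → R} (hg : ∀ i ∈ l, g i ∈ P)
    (hfg : ∀ i ∈ l, f i - g i ∈ P) : (l.map f).prod - (l.map g).prod ∈ P := by
  induction l with
  | nil => simp
  | cons i l ih =>
    obtain ⟨hgi, hgl⟩ := List.forall_mem_cons.1 hg
    obtain ⟨hfgi, hfgl⟩ := List.forall_mem_cons.1 hfg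
    have hfi : f i ∈ P := by simpa using add_mem hfgi hgi
    have hgprod : (l.map g).prod ∈ P := list_prod_mem (by simpa using hgl)
    have htele : f i * (l.map f).prod - g i * (l.map g).prod =
        f i * ((l.map f).prod - (l.map g).prod) + (f i - g i) * (l.map g).prod := by
      noncomm_ring
    rw [List.map_cons, List.map_cons, List.prod_cons, List.prod_cons, htele]
    exact add_mem (mul_mem hfi (ih hgl hfgl)) (mul_mem hfgi hgprod)

end ListProducts

section NormalCones

variable {E F : Type*} [NormedAddCommGroup E] [NormedSpace ℝ E] [NormedAddCommGroup F]
  [NormedSpace ℝ F]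

/-- A cone `K` is normal if the norm is monotone up to a constant for the order it induces:
`0 ≤ x ≤ y` implies `‖x‖ ≤ κ * ‖y‖`. Here `y` is written `x + z` with `z ∈ K`. -/
def IsNormalCone (K : Set F) : Prop :=
  ∃ κ : ℝ, 0 < κ ∧ ∀ x ∈ K, ∀ z ∈ K, ‖x‖ ≤ κ * ‖x + z‖

lemma isNormalCone_of_isClosed_of_pointed [ProperSpace F] {K : Set F} (hclosed : IsClosed K)
    (hsmul : ∀ c : ℝ, 0 ≤ c → ∀ x ∈ K, c • x ∈ K) (hpointed : ∀ x ∈ K, -x ∈ K → x = 0) :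
    IsNormalCone K := by
  have hdisj : Disjoint (K ∩ Metric.sphere 0 1) (-K) := by
    rw [Set.disjoint_left]
    rintro x ⟨hx, hx1⟩ hxneg
    exact ne_zero_of_mem_unit_sphere ⟨x, hx1⟩ (hpointed x hx hxneg)
  obtain ⟨r, hr, hdist⟩ := Metric.exists_pos_forall_lt_edist
    ((isCompact_sphere (0 : F) 1).inter_left hclosed) hclosed.neg hdisj
  refine ⟨(r : ℝ)⁻¹, by positivity, fun x hx z hz => ?_⟩
  rcases eq_or_ne x 0 with rfl | hx0
  · rw [norm_zero]
    positivity
  have hxpos : 0 < ‖x‖ := norm_pos_iff.2 hx0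
  have hunit : (r : ℝ) < ‖‖x‖⁻¹ • x + ‖x‖⁻¹ • z‖ := by
    have h := hdist (‖x‖⁻¹ • x)
      ⟨hsmul _ (by positivity) x hx, by simp [norm_smul, hxpos.ne']⟩
      (-(‖x‖⁻¹ • z)) (by simpa using hsmul _ (by positivity) z hz)
    rwa [edist_nndist, ENNReal.coe_lt_coe, ← NNReal.coe_lt_coe, coe_nndist, dist_eq_norm,
      sub_neg_eq_add] at h
  rw [← smul_add, norm_smul, norm_inv, norm_norm, inv_mul_eq_div, lt_div_iff₀ hxpos] at hunit
  rw [inv_mul_eq_div, le_div_iff₀' (by positivity)]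
  exact hunit.le

lemma norm_le_div_of_forall_mem_closedBall {f : E →L[ℝ] F} {e : E} {r b : ℝ} (hr : 0 < r)
    (hf : ∀ x ∈ Metric.closedBall e r, ‖f x‖ ≤ b) : ‖f‖ ≤ b / r := by
  have hb : 0 ≤ b := (norm_nonneg _).trans (hf e (Metric.mem_closedBall_self hr.le))
  refine ContinuousLinearMap.opNorm_le_of_unit_norm (by positivity) fun x hx => ?_
  have hrx : ‖r • x‖ = r := by rw [norm_smul, hx, mul_one, Real.norm_of_nonneg hr.le]
  have hdiff : (2 * r) • f x = f (e + r • x) - f (e - r • x) := by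
    simp only [map_add, map_sub, map_smul]
    module
  have hnorm : 2 * r * ‖f x‖ ≤ b + b :=
    calc 2 * r * ‖f x‖ = ‖(2 * r) • f x‖ := by
          rw [norm_smul, Real.norm_of_nonneg (by positivity)]
      _ ≤ ‖f (e + r • x)‖ + ‖f (e - r • x)‖ := hdiff ▸ norm_sub_le _ _
      _ ≤ b + b := add_le_add (hf _ (by simp [hrx])) (hf _ (by simp [hrx]))
  rw [le_div_iff₀ hr]
  linarith

lemma IsNormalCone.exists_norm_le_mul_norm {K : Set F} (hK : IsNormalCone K) {C : Set E}
    (hC : (interior C).Nonempty) : ∃ c : ℝ, 0 < c ∧ ∀ A B : E →L[ℝ] F,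
      Set.MapsTo B C K → Set.MapsTo (A - B) C K → ‖B‖ ≤ c * ‖A‖ := by
  obtain ⟨κ, hκ, hnormal⟩ := hK
  obtain ⟨e, he⟩ := hC
  obtain ⟨r, hr, hball⟩ := Metric.nhds_basis_closedBall.mem_iff.1 (mem_interior_iff_mem_nhds.1 he)
  refine ⟨κ * (‖e‖ + r) / r, by positivity, fun A B hB hAB => ?_⟩
  have hbound : ∀ x ∈ Metric.closedBall e r, ‖B x‖ ≤ κ * (‖A‖ * (‖e‖ + r)) := fun x hx =>
    calc ‖B x‖ ≤ κ * ‖B x + (A - B) x‖ := hnormal _ (hB (hball hx)) _ (hAB (hball hx))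
      _ = κ * ‖A x‖ := by rw [sub_apply, add_sub_cancel]
      _ ≤ κ * (‖A‖ * (‖e‖ + r)) := by
          gcongr
          exact A.le_opNorm_of_le (norm_le_of_mem_closedBall hx)
  exact (norm_le_div_of_forall_mem_closedBall hr hbound).trans_eq (by ring)

end NormalCones

section GrowthRates

lemma tendsto_const_rpow_one_div_natCast {c : ℝ} (hc : c ≠ 0) :
    Tendsto (fun k : ℕ => c ^ (1 / k : ℝ)) atTop (𝓝 1) := by
  simpa using (tendsto_const_nhds (x := c)).rpow tendsto_one_div_atTop_nhds_zero_nat (Or.inl hc)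

lemma limsup_rpow_one_div_mul_le {a b : ℕ → ℝ} {c q : ℝ} (hb : ∀ k, 0 ≤ b k) (ha : ∀ k, 0 ≤ a k)
    (hbdd : IsBoundedUnder (· ≤ ·) atTop fun k : ℕ => a k ^ (1 / k : ℝ)) (hc : 0 < c) (hq : 0 < q)
    (h : ∀ k, b k * q ^ k ≤ c * a k) :
    limsup (fun k : ℕ => b k ^ (1 / k : ℝ)) atTop * q ≤
      limsup (fun k : ℕ => a k ^ (1 / k : ℝ)) atTop := by
  set u : ℕ → ℝ := fun k => c ^ (1 / k : ℝ) / q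
  set v : ℕ → ℝ := fun k => a k ^ (1 / k : ℝ)
  have hu : Tendsto u atTop (𝓝 q⁻¹) := by
    rw [← one_div]
    exact (tendsto_const_rpow_one_div_natCast hc.ne').div_const q
  have hu0 : ∃ᶠ k in atTop, 0 ≤ u k := .of_forall fun k => by positivity
  have hv0 : 0 ≤ᶠ[atTop] v := .of_forall fun k => Real.rpow_nonneg (ha k) _
  have hroot : ∀ᶠ k : ℕ in atTop, b k ^ (1 / k : ℝ) ≤ (u * v) k := by
    filter_upwards [eventually_ne_atTop 0] with k hk
    rw [Pi.mul_apply, div_mul_eq_mul_div, le_div_iff₀ hq, ← Real.mul_rpow hc.le (ha k)]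
    calc b k ^ (1 / k : ℝ) * q = (b k * q ^ k) ^ (1 / k : ℝ) := by
          rw [Real.mul_rpow (hb k) (by positivity), one_div, Real.pow_rpow_inv_natCast hq.le hk]
      _ ≤ (c * a k) ^ (1 / k : ℝ) :=
          Real.rpow_le_rpow (mul_nonneg (hb k) (by positivity)) (h k) (by positivity)
  rw [← le_div_iff₀ hq, div_eq_inv_mul, ← hu.limsup_eq]
  exact (limsup_le_limsup hroot
    (isCoboundedUnder_le_of_le atTop fun k => Real.rpow_nonneg (hb k) _)
    (isBoundedUnder_le_mul_of_nonneg hu0 hu.isBoundedUnder_le hv0 hbdd)).trans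
    (limsup_mul_le hu0 hu.isBoundedUnder_le hv0 hbdd)

end GrowthRates

section LpNorm

variable {α E : Type*} [MeasurableSpace α] {μ : Measure α} [NormedAddCommGroup E] {f : α → E}

lemma lpNorm_le_lpNorm_of_exponent_le [IsProbabilityMeasure μ] {p q : ℝ≥0∞} (hpq : p ≤ q)
    (hf : MemLp f q μ) : lpNorm f p μ ≤ lpNorm f q μ := by
  rw [← toReal_eLpNorm hf.1, ← toReal_eLpNorm hf.1]
  exact ENNReal.toReal_mono hf.eLpNorm_ne_top (eLpNorm_le_eLpNorm_of_exponent_le hpq hf.1)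

lemma lpNorm_le_of_ae_norm_le [IsProbabilityMeasure μ] {C : ℝ} (hf : AEStronglyMeasurable f μ)
    (hC : ∀ᵐ x ∂μ, ‖f x‖ ≤ C) (p : ℝ≥0∞) : lpNorm f p μ ≤ C := by
  obtain ⟨x, hx⟩ := hC.exists
  rw [← toReal_eLpNorm hf]
  refine ENNReal.toReal_le_of_le_ofReal ((norm_nonneg _).trans hx) ?_
  simpa using eLpNorm_le_of_ae_bound (p := p) hC

lemma mul_measureReal_rpow_le_lpNorm {p : ℝ≥0∞} (hp0 : p ≠ 0) (hp : p ≠ ∞) (hf : MemLp f p μ)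
    {s : Set α} {a : ℝ} (ha : 0 ≤ a) (hs : ∀ x ∈ s, a ≤ ‖f x‖) :
    a * μ.real s ^ (1 / p.toReal) ≤ lpNorm f p μ := by
  have hp' : 0 < p.toReal := ENNReal.toReal_pos hp0 hp
  have hsub : s ⊆ {x | ENNReal.ofReal a ^ p.toReal ≤ ‖f x‖ₑ ^ p.toReal} := fun x hx =>
    ENNReal.rpow_le_rpow ((ENNReal.ofReal_le_ofReal (hs x hx)).trans_eq (ofReal_norm _)) hp'.le
  have hmarkov : ENNReal.ofReal a * μ s ^ (1 / p.toReal) ≤ eLpNorm f p μ :=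
    calc ENNReal.ofReal a * μ s ^ (1 / p.toReal)
        = (ENNReal.ofReal a ^ p.toReal * μ s) ^ (1 / p.toReal) := by
          rw [ENNReal.mul_rpow_of_nonneg _ _ (by positivity), ← ENNReal.rpow_mul,
            mul_one_div_cancel hp'.ne', ENNReal.rpow_one]
      _ ≤ _ := by gcongr
      _ ≤ eLpNorm f p μ := pow_mul_meas_ge_le_eLpNorm μ hp0 hp hf.1 _
  have h := ENNReal.toReal_mono hf.eLpNorm_ne_top hmarkov
  rwa [ENNReal.toReal_mul, ENNReal.toReal_ofReal ha, ← ENNReal.toReal_rpow, toReal_eLpNorm hf.1]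
    at h

end LpNorm

lemma pow_le_measureReal_pi_univ_pi {ι α : Type*} [Fintype ι] [MeasurableSpace α] {μ : Measure α}
    [IsFiniteMeasure μ] {s : ι → Set α} {δ : ℝ} (hδ : 0 ≤ δ) (hs : ∀ i, δ ≤ μ.real (s i)) :
    δ ^ Fintype.card ι ≤ (Measure.pi fun _ : ι => μ).real (Set.univ.pi s) := by
  rw [measureReal_def, Measure.pi_pi, ENNReal.toReal_prod, ← Finset.card_univ]
  rw [← Finset.prod_const]
  exact Finset.prod_le_prod (fun _ _ => hδ) fun i _ => hs i

-- For this norm `‖A‖` and `opNorm A` agree definitionally.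
open scoped Matrix.Norms.L2Operator

variable {m : ℕ}

section MatrixProducts

lemma norm_one_matrix_le : ‖(1 : Mat m)‖ ≤ 1 := by
  rw [Matrix.cstar_norm_def, map_one]
  exact ContinuousLinearMap.norm_id_le

variable {k : ℕ}

lemma prodRev_eq_list_prod_map (f : Fin k → Mat m) :
    prodRev f = ((List.finRange k).reverse.map f).prod := by
  rw [prodRev, List.ofFn_eq_map, List.map_reverse]

lemma continuous_prodRev (m k : ℕ) : Continuous (prodRev : (Fin k → Mat m) → Mat m) := by
  simp only [funext prodRev_eq_list_prod_map]
  exact continuous_list_prod _ fun i _ => continuous_apply i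

lemma norm_prodRev_le_pow {f : Fin k → Mat m} {C : ℝ} (hf : ∀ i, ‖f i‖ ≤ C) :
    ‖prodRev f‖ ≤ C ^ k := by
  rw [prodRev_eq_list_prod_map]
  simpa using norm_list_prod_map_le_pow (l := (List.finRange k).reverse) norm_one_matrix_le
    fun i _ => hf i

lemma prodRev_smul (c : ℝ) (f : Fin k → Mat m) :
    prodRev (fun i => c • f i) = c ^ k • prodRev f := by
  rw [prodRev_eq_list_prod_map, prodRev_eq_list_prod_map]
  simpa [Function.comp_def] using (List.smul_prod ((List.finRange k).reverse.map f) c).symm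

end MatrixProducts

namespace IsProperCone

variable {K : Set (EucSp m)}

lemma zero_mem_s5 (hK : IsProperCone K) : 0 ∈ K := by
  obtain ⟨e, he⟩ := hK.solid
  simpa using hK.smul_mem 0 le_rfl e (interior_subset he)

lemma add_mem (hK : IsProperCone K) {x y : EucSp m} (hx : x ∈ K) (hy : y ∈ K) : x + y ∈ K := by
  have hmid := hK.convex hx hy (a := 1 / 2) (b := 1 / 2) (by norm_num) (by norm_num) (by norm_num)
  simpa [← smul_add, smul_smul] using hK.smul_mem 2 zero_le_two _ hmid

/-- The matrices leaving a proper cone `K` invariant, as a subsemiring; its elements are the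
nonnegative matrices for the order `A ≤ B ↔ B - A ∈ π(K)`. -/
def piSubsemiring (hK : IsProperCone K) : Subsemiring (Mat m) where
  carrier := piCone K
  one_mem' x hx := by simpa using hx
  mul_mem' hA hB x hx := by
    simpa [Matrix.toLpLin_apply, Matrix.mulVec_mulVec] using hA _ (hB x hx)
  zero_mem' x _ := by simpa using hK.zero_mem_s5
  add_mem' hA hB x hx := by simpa using hK.add_mem (hA x hx) (hB x hx)

lemma smul_mem_piSubsemiring (hK : IsProperCone K) {A : Mat m} (hA : A ∈ hK.piSubsemiring)
    {c : ℝ} (hc : 0 ≤ c) : c • A ∈ hK.piSubsemiring := fun x hx => by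
  simpa using hK.smul_mem c hc _ (hA x hx)

lemma exists_norm_le_mul_norm (hK : IsProperCone K) : ∃ c : ℝ, 0 < c ∧ ∀ A B : Mat m,
    B ∈ hK.piSubsemiring → A - B ∈ hK.piSubsemiring → ‖B‖ ≤ c * ‖A‖ := by
  obtain ⟨c, hc, hle⟩ := (isNormalCone_of_isClosed_of_pointed hK.isClosed hK.smul_mem
    hK.pointed).exists_norm_le_mul_norm hK.solid
  refine ⟨c, hc, fun A B hB hAB => hle (Matrix.toEuclideanCLM (𝕜 := ℝ) A)
    (Matrix.toEuclideanCLM (𝕜 := ℝ) B) (fun x hx => hB x hx) fun x hx => ?_⟩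
  rw [← map_sub]
  exact hAB x hx

lemma exists_pow_mul_norm_prodRev_le (hK : IsProperCone K) : ∃ c : ℝ, 0 < c ∧
    ∀ {t : ℝ}, 0 ≤ t → ∀ {k : ℕ} {M f : Fin k → Mat m}, (∀ i, M i ∈ hK.piSubsemiring) →
      (∀ i, f i ∈ matSSet K (t • M i)) → t ^ k * ‖prodRev M‖ ≤ c * ‖prodRev f‖ := by
  obtain ⟨c, hc, hle⟩ := hK.exists_norm_le_mul_norm
  refine ⟨c, hc, fun {t} ht k M f hM hf => ?_⟩
  have htM : ∀ i, t • M i ∈ hK.piSubsemiring := fun i => hK.smul_mem_piSubsemiring (hM i) ht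
  have hprod : prodRev (fun i => t • M i) ∈ hK.piSubsemiring := by
    rw [prodRev_eq_list_prod_map]
    exact list_prod_mem (by simpa using htM)
  have hsub : prodRev f - prodRev (fun i => t • M i) ∈ hK.piSubsemiring := by
    rw [prodRev_eq_list_prod_map, prodRev_eq_list_prod_map]
    exact list_prod_map_sub_list_prod_map_mem _ (fun i _ => htM i) fun i _ => hf i
  have h := hle _ _ hprod hsub
  rwa [prodRev_smul, norm_smul, Real.norm_of_nonneg (pow_nonneg ht k)] at h

end IsProperCone

section Moments

lemma msupport_eq_support (μ : Measure (Mat m)) : msupport μ = μ.support := by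
  ext A
  simp only [Metric.nhds_basis_ball.mem_measureSupport, pos_iff_ne_zero, Metric.ball,
    dist_eq_norm]
  rfl

lemma HasBoundedSupport.exists_ae_norm_le {μ : Measure (Mat m)} (hμ : HasBoundedSupport μ) :
    ∃ C : ℝ, ∀ᵐ A ∂μ, ‖A‖ ≤ C := by
  obtain ⟨C, hC⟩ := hμ
  have hsupp : ∀ᵐ A ∂μ, A ∈ msupport μ := msupport_eq_support μ ▸ Measure.support_mem_ae
  exact ⟨C, hsupp.mono hC⟩

/-- The `L^p` norm of the random product `A_k ⋯ A_1` of i.i.d. matrices with law `μ`; its growth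
rate in `k` is the `p`-radius of `μ`. -/
def kLpNorm (μ : Measure (Mat m)) (p k : ℕ) : ℝ :=
  lpNorm (prodRev : (Fin k → Mat m) → Mat m) p (Measure.pi fun _ => μ)

variable {μ : Measure (Mat m)}

lemma kLpNorm_nonneg (p k : ℕ) : 0 ≤ kLpNorm μ p k := lpNorm_nonneg

instance : BorelSpace (Mat m) := inferInstanceAs (BorelSpace (Fin m → Fin m → ℝ))

lemma aestronglyMeasurable_prodRev (k : ℕ) (P : Measure (Fin k → Mat m)) :
    AEStronglyMeasurable prodRev P :=
  (continuous_prodRev m k).aestronglyMeasurable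

lemma pRadius_eq_limsup_kLpNorm {p : ℕ} (hp : p ≠ 0) :
    pRadius μ p = limsup (fun k : ℕ => kLpNorm μ p k ^ (1 / k : ℝ)) atTop := by
  refine congrArg (limsup · atTop) (funext fun k => ?_)
  have hmoment : kLpNorm μ p k = kExpNorm μ p k ^ (1 / p : ℝ) := by
    rw [kLpNorm, lpNorm_eq_integral_norm_rpow_toReal (by exact_mod_cast hp)
      (ENNReal.natCast_ne_top p) (aestronglyMeasurable_prodRev k _)]
    simp only [ENNReal.toReal_natCast, Real.rpow_natCast, one_div]
    rfl
  have hnonneg : 0 ≤ kExpNorm μ p k := integral_nonneg fun _ => pow_nonneg (norm_nonneg _) p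
  rw [hmoment, ← Real.rpow_mul hnonneg, one_div_mul_one_div]

variable {C : ℝ}

lemma ae_norm_prodRev_le_pow [SigmaFinite μ] (hC : ∀ᵐ A ∂μ, ‖A‖ ≤ C) (k : ℕ) :
    ∀ᵐ f : Fin k → Mat m ∂(Measure.pi fun _ => μ), ‖prodRev f‖ ≤ C ^ k := by
  have hall : ∀ᵐ f : Fin k → Mat m ∂(Measure.pi fun _ => μ), ∀ i, ‖f i‖ ≤ C :=
    eventually_all.2 fun i =>
      (Measure.tendsto_eval_ae_ae (μ := fun _ : Fin k => μ) (i := i)).eventually hC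
  exact hall.mono fun _ => norm_prodRev_le_pow

lemma memLp_prodRev [IsFiniteMeasure μ] (hC : ∀ᵐ A ∂μ, ‖A‖ ≤ C) (p : ℝ≥0∞) (k : ℕ) :
    MemLp (prodRev : (Fin k → Mat m) → Mat m) p (Measure.pi fun _ => μ) :=
  .of_bound (aestronglyMeasurable_prodRev k _) (C ^ k) (ae_norm_prodRev_le_pow hC k)

variable [IsProbabilityMeasure μ]

lemma kLpNorm_mono (hC : ∀ᵐ A ∂μ, ‖A‖ ≤ C) (k : ℕ) : Monotone fun p => kLpNorm μ p k :=
  fun _ q hpq => lpNorm_le_lpNorm_of_exponent_le (by exact_mod_cast hpq) (memLp_prodRev hC q k)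

lemma kLpNorm_rpow_le (hC : ∀ᵐ A ∂μ, ‖A‖ ≤ C) (p : ℕ) {k : ℕ} (hk : k ≠ 0) :
    kLpNorm μ p k ^ (1 / k : ℝ) ≤ C := by
  obtain ⟨A, hA⟩ := hC.exists
  calc kLpNorm μ p k ^ (1 / k : ℝ) ≤ (C ^ k) ^ (1 / k : ℝ) :=
        Real.rpow_le_rpow (kLpNorm_nonneg p k) (lpNorm_le_of_ae_norm_le
          (aestronglyMeasurable_prodRev k _) (ae_norm_prodRev_le_pow hC k) p) (by positivity)
    _ = C := by rw [one_div, Real.pow_rpow_inv_natCast ((norm_nonneg A).trans hA) hk]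

lemma isBoundedUnder_kLpNorm_rpow (hC : ∀ᵐ A ∂μ, ‖A‖ ≤ C) (p : ℕ) :
    IsBoundedUnder (· ≤ ·) atTop fun k : ℕ => kLpNorm μ p k ^ (1 / k : ℝ) :=
  isBoundedUnder_of_eventually_le ((eventually_ne_atTop 0).mono fun _ => kLpNorm_rpow_le hC p)

lemma isCoboundedUnder_kLpNorm_rpow (μ : Measure (Mat m)) (p : ℕ) :
    IsCoboundedUnder (· ≤ ·) atTop fun k : ℕ => kLpNorm μ p k ^ (1 / k : ℝ) :=
  isCoboundedUnder_le_of_le atTop fun k => Real.rpow_nonneg (kLpNorm_nonneg p k) _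

lemma pRadius_le (hC : ∀ᵐ A ∂μ, ‖A‖ ≤ C) {p : ℕ} (hp : p ≠ 0) : pRadius μ p ≤ C := by
  rw [pRadius_eq_limsup_kLpNorm hp]
  exact limsup_le_of_le (isCoboundedUnder_kLpNorm_rpow μ p)
    ((eventually_ne_atTop 0).mono fun _ => kLpNorm_rpow_le hC p)

lemma pRadius_le_pRadius (hC : ∀ᵐ A ∂μ, ‖A‖ ≤ C) {p q : ℕ} (hp : p ≠ 0) (hpq : p ≤ q) :
    pRadius μ p ≤ pRadius μ q := by
  rw [pRadius_eq_limsup_kLpNorm hp, pRadius_eq_limsup_kLpNorm (by lia)]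
  exact limsup_le_limsup
    (.of_forall fun k => Real.rpow_le_rpow (kLpNorm_nonneg p k) (kLpNorm_mono hC k hpq)
      (by positivity))
    (isCoboundedUnder_kLpNorm_rpow μ p) (isBoundedUnder_kLpNorm_rpow hC q)

lemma exists_tendsto_pRadius (hC : ∀ᵐ A ∂μ, ‖A‖ ≤ C) :
    ∃ L : ℝ, Tendsto (pRadius μ) atTop (𝓝 L) :=
  ⟨⨆ p : ℕ, pRadius μ (p + 1), (tendsto_add_atTop_iff_nat 1).1 <| tendsto_atTop_ciSup
    (fun p _ hpq => pRadius_le_pRadius hC p.succ_ne_zero (Nat.succ_le_succ hpq))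
    ⟨C, Set.forall_mem_range.2 fun p => pRadius_le hC p.succ_ne_zero⟩⟩

end Moments

section LowerBound

lemma jsr_mul_le_limsup {N : Set (Mat m)} {a : ℕ → ℝ} {c q : ℝ} (ha : ∀ k, 0 ≤ a k)
    (hbdd : IsBoundedUnder (· ≤ ·) atTop fun k : ℕ => a k ^ (1 / k : ℝ)) (hc : 0 < c) (hq : 0 < q)
    (h : ∀ k, ∀ f : Fin k → Mat m, (∀ i, f i ∈ N) → ‖prodRev f‖ * q ^ k ≤ c * a k) :
    jsr N * q ≤ limsup (fun k : ℕ => a k ^ (1 / k : ℝ)) atTop := by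
  refine limsup_rpow_one_div_mul_le (fun k => Real.sSup_nonneg ?_) ha hbdd hc hq fun k => ?_
  · rintro _ ⟨f, -, rfl⟩
    exact norm_nonneg (prodRev f)
  · have hak := ha k
    rw [← le_div_iff₀ (by positivity)]
    refine Real.sSup_le ?_ (by positivity)
    rintro _ ⟨f, hf, rfl⟩
    rw [le_div_iff₀ (by positivity)]
    exact h k f hf

variable {μ : Measure (Mat m)} [IsProbabilityMeasure μ] {C : ℝ} {K : Set (EucSp m)}
  {N : Set (Mat m)} {t δ : ℝ}

lemma jsr_mul_le_pRadius (hC : ∀ᵐ A ∂μ, ‖A‖ ≤ C) (hK : IsProperCone K) (hN : SetLeavesInv N K)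
    (ht : 0 < t) (hδ : 0 < δ) (hδN : ∀ M ∈ N, δ ≤ μ.real (matSSet K (t • M))) {p : ℕ}
    (hp : p ≠ 0) : jsr N * (δ ^ (1 / p : ℝ) * t) ≤ pRadius μ p := by
  obtain ⟨c, hc, hle⟩ := hK.exists_pow_mul_norm_prodRev_le
  rw [pRadius_eq_limsup_kLpNorm hp]
  refine jsr_mul_le_limsup (kLpNorm_nonneg p) (isBoundedUnder_kLpNorm_rpow hC p) hc
    (by positivity) fun k M hM => ?_
  set box : Set (Fin k → Mat m) := Set.univ.pi fun i => matSSet K (t • M i)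
  have hbox : δ ^ k ≤ (Measure.pi fun _ => μ).real box := by
    simpa using pow_le_measureReal_pi_univ_pi hδ.le fun i => hδN _ (hM i)
  have hdom : ∀ f ∈ box, t ^ k * ‖prodRev M‖ / c ≤ ‖prodRev f‖ := fun f hf => by
    rw [div_le_iff₀' hc]
    exact hle ht.le (fun i => hN _ (hM i)) fun i => hf i (Set.mem_univ i)
  have hmarkov := mul_measureReal_rpow_le_lpNorm (p := p) (by exact_mod_cast hp)
    (ENNReal.natCast_ne_top p) (memLp_prodRev hC p k) (by positivity) hdom
  rw [div_mul_eq_mul_div, div_le_iff₀' hc, ENNReal.toReal_natCast] at hmarkov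
  calc ‖prodRev M‖ * (δ ^ (1 / p : ℝ) * t) ^ k
      = t ^ k * ‖prodRev M‖ * (δ ^ k) ^ (1 / p : ℝ) := by
        rw [mul_pow, Real.rpow_pow_comm hδ.le]
        ring
    _ ≤ t ^ k * ‖prodRev M‖ * (Measure.pi fun _ => μ).real box ^ (1 / p : ℝ) := by gcongr
    _ ≤ c * kLpNorm μ p k := hmarkov

lemma jsr_mul_le_of_tendsto_pRadius (hC : ∀ᵐ A ∂μ, ‖A‖ ≤ C) (hK : IsProperCone K)
    (hN : SetLeavesInv N K) (ht : 0 < t) (hδ : 0 < δ)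
    (hδN : ∀ M ∈ N, δ ≤ μ.real (matSSet K (t • M))) {L : ℝ}
    (hL : Tendsto (pRadius μ) atTop (𝓝 L)) : jsr N * t ≤ L := by
  have hlim : Tendsto (fun p : ℕ => jsr N * (δ ^ (1 / p : ℝ) * t)) atTop (𝓝 (jsr N * t)) := by
    simpa using ((tendsto_const_rpow_one_div_natCast hδ.ne').mul_const t).const_mul (jsr N)
  exact le_of_tendsto_of_tendsto hlim hL
    ((eventually_ne_atTop 0).mono fun _ => jsr_mul_le_pRadius hC hK hN ht hδ hδN)

end LowerBound

theorem stmt5_general (μ : Measure (Mat m)) [IsProbabilityMeasure μ] (hbdd : HasBoundedSupport μ)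
    {K : Set (EucSp m)} (hK : IsProperCone K) {N : Set (Mat m)} (hN : SetLeavesInv N K)
    (hunif : ∀ t ∈ Set.Ioo (0 : ℝ) 1, ∃ δ : ℝ, 0 < δ ∧
      ∀ M ∈ N, ENNReal.ofReal δ ≤ μ (matSSet K (t • M))) :
    ∃ L : ℝ, Tendsto (fun p : ℕ => pRadius μ p) atTop (𝓝 L) ∧ jsr N ≤ L := by
  obtain ⟨C, hC⟩ := hbdd.exists_ae_norm_le
  obtain ⟨L, hL⟩ := exists_tendsto_pRadius hC
  have hscaled : ∀ t ∈ Set.Ioo (0 : ℝ) 1, jsr N * t ≤ L := fun t ht => by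
    obtain ⟨δ, hδ, hδN⟩ := hunif t ht
    exact jsr_mul_le_of_tendsto_pRadius hC hK hN ht.1 hδ
      (fun M hM => (ENNReal.ofReal_le_iff_le_toReal (measure_ne_top _ _)).1 (hδN M hM)) hL
  have hlim : Tendsto (fun t : ℝ => jsr N * t) (𝓝[<] 1) (𝓝 (jsr N)) := by
    simpa using ((continuous_const_mul (jsr N)).tendsto 1).mono_left nhdsWithin_le_nhds
  exact ⟨L, hL, le_of_tendsto hlim (eventually_of_mem (Ioo_mem_nhdsLT zero_lt_one) hscaled)⟩

/-- If `N ⊆ supp μ` is a measurable nonempty set such that for every `ε > 0`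
there is a uniform `δ > 0` with `μ(S_{(1−ε)M}) ≥ δ` for all `M ∈ N`, then
`ρ̂(N) ≤ lim_{p→∞} ρ_{p,μ}`. -/
theorem stmt5 (n : ℕ) (hn : 1 ≤ n) (μ : Measure (Mat n)) [IsProbabilityMeasure μ]
    (hbdd : HasBoundedSupport μ)
    (K : Set (EucSp n)) (hK : IsProperCone K) (hinv : SetLeavesInv (msupport μ) K)
    (N : Set (Mat n)) (hNsub : N ⊆ msupport μ) (hNmeas : MeasurableSet N) (hNne : N.Nonempty)
    (hunif : ∀ ε : ℝ, 0 < ε → ∃ δ : ℝ, 0 < δ ∧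
      ∀ M ∈ N, ENNReal.ofReal δ ≤ μ (matSSet K ((1 - ε) • M))) :
    ∃ L : ℝ, Tendsto (fun p : ℕ => pRadius μ p) atTop (𝓝 L) ∧ jsr N ≤ L :=
  stmt5_general μ hbdd hK (fun A hA => hinv A (hNsub hA)) fun t ht => by
    simpa using hunif (1 - t) (sub_pos.2 ht.2)

end
end
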